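/- arXiv:1707.02953 — 2 statements merged into one kernel-verified Lean document; each statement's English description precedes it below -/
import Mathlib

section
/- Every finite simple graph with maximum degree at most 4 admits a string contact representation in ℝ³ of complexity at most 4, i.e., one in which every string is a B₄-string. -/
open Set

/-- Points of ℝ³, identified with triples of real numbers. -/
abbrev Pt3 : Type := Fin 3 → ℝ

/-- A vector is parallel to a coordinate axis if at most one of its
three coordinates is nonzero. -/
def AxisParallel (v : Pt3) : Prop := ∃ i : Fin 3, ∀ j : Fin 3, j ≠ i → v j = 0

/-- An axis-aligned string in ℝ³: a simple polygonal path `pts 0, pts 1, …, pts k`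
(`k ≥ 1`) with consecutive points distinct, each difference parallel to a coordinate
axis, and the path non-self-intersecting (consecutive segments meet exactly at their
common endpoint and non-consecutive segments are disjoint). -/
structure AAString where
  k : ℕ
  pts : Fin (k + 1) → Pt3
  k_pos : 1 ≤ k
  consec_ne : ∀ i : Fin k, pts i.castSucc ≠ pts i.succ
  axis : ∀ i : Fin k, AxisParallel (pts i.succ - pts i.castSucc)
  simple_consec : ∀ i j : Fin k, (i : ℕ) + 1 = (j : ℕ) →
    segment ℝ (pts i.castSucc) (pts i.succ) ∩ segment ℝ (pts j.castSucc) (pts j.succ)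
      = {pts i.succ}
  simple_far : ∀ i j : Fin k, (i : ℕ) + 1 < (j : ℕ) →
    segment ℝ (pts i.castSucc) (pts i.succ) ∩ segment ℝ (pts j.castSucc) (pts j.succ) = ∅

/-- The string, as a subset of ℝ³: the union of its closed segments. -/
def AAString.carrier (S : AAString) : Set Pt3 :=
  ⋃ i : Fin S.k, segment ℝ (S.pts i.castSucc) (S.pts i.succ)

/-- The two endpoints of the string. -/
def AAString.endpoints (S : AAString) : Set Pt3 := {S.pts 0, S.pts (Fin.last S.k)}

/-- The number of bends of the string: one less than its number of segments. -/
def AAString.bends (S : AAString) : ℕ := S.k - 1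

/-- A string contact representation of a simple graph `G`: two distinct strings meet
only at endpoints of one of them, no point lies on three distinct strings, and two
strings intersect iff the corresponding vertices are adjacent. -/
def IsStringContactRep {V : Type*} (G : SimpleGraph V) (Ψ : V → AAString) : Prop :=
  (∀ u v : V, u ≠ v → ∀ p ∈ (Ψ u).carrier ∩ (Ψ v).carrier,
      p ∈ (Ψ u).endpoints ∪ (Ψ v).endpoints) ∧
  (∀ u v w : V, u ≠ v → u ≠ w → v ≠ w →
      ∀ p : Pt3, ¬ (p ∈ (Ψ u).carrier ∧ p ∈ (Ψ v).carrier ∧ p ∈ (Ψ w).carrier)) ∧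
  (∀ u v : V, u ≠ v → (((Ψ u).carrier ∩ (Ψ v).carrier).Nonempty ↔ G.Adj u v))


/-- A partial function `f` with a set of roots `R`, distance `d` to the roots and root map `ρ`. -/
structure Rooted {V : Type*} (f : V → Option V) (R : Set V) (d : V → ℕ) (ρ : V → V) : Prop where
  step : ∀ v, v ∉ R → ∃ w, f v = some w ∧ d v = d w + 1 ∧ ρ v = ρ w
  root_d : ∀ v, v ∈ R → d v = 0
  root_ρ : ∀ v, v ∈ R → ρ v = v
  root_next : ∀ v, v ∈ R → ∀ w, f v = some w → ρ w = v
  mem : ∀ v, ρ v ∈ R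

theorem exists_key {V : Type*} [Fintype V] (c : V → ℕ) :
    ∃ X : V → ℕ, Function.Injective X ∧ ∀ u v, c u < c v → X u < X v := by
  classical
  let ι := Fintype.equivFin V
  refine ⟨fun v => c v * Fintype.card V + (ι v : ℕ), ?_, ?_⟩
  · intro u v h
    have hu := (ι u).2
    have hv := (ι v).2
    simp only at h
    have : (ι u : ℕ) = ι v := by
      have := congrArg (· % Fintype.card V) h
      simpa [Nat.add_mod, Nat.mod_eq_of_lt hu, Nat.mod_eq_of_lt hv] using this
    exact ι.injective (Fin.ext this)
  · intro u v h
    have hu := (ι u).2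
    have : (c u + 1) * Fintype.card V ≤ c v * Fintype.card V := Nat.mul_le_mul_right _ h
    simp only
    nlinarith

theorem exists_roots {V : Type*} [Fintype V] (D : V → V → Prop) (ω : V → ℕ) :
    ∃ (R : Set V) (d : V → ℕ) (ρ nxt : V → V),
      (∀ v, v ∉ R → D v (nxt v) ∧ d v = d (nxt v) + 1 ∧ ρ v = ρ (nxt v)) ∧
      (∀ v, v ∈ R → d v = 0) ∧ (∀ v, v ∈ R → ρ v = v) ∧ (∀ v, ρ v ∈ R) ∧
      (∀ r ∈ R, ∀ v, Relation.ReflTransGen D r v → ρ v = r ∧ ω r ≤ ω v) := by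
  classical
  let Rc : V → Finset V := fun v => Finset.univ.filter (fun w => Relation.ReflTransGen D v w)
  obtain ⟨key, hkinj, hk⟩ : ∃ X : V → ℕ, Function.Injective X ∧
      ∀ u v, ((Rc u).card < (Rc v).card ∨ ((Rc u).card = (Rc v).card ∧ ω u < ω v)) →
        X u < X v := by
    let N := Finset.univ.sup ω + 1
    have hN : ∀ v, ω v < N := fun v => Nat.lt_succ_of_le (Finset.le_sup (Finset.mem_univ v))
    obtain ⟨X, h1, h2⟩ := exists_key (fun v => (Rc v).card * N + ω v)
    refine ⟨X, h1, fun u v h => h2 u v ?_⟩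
    have := hN u
    rcases h with h | ⟨h, h'⟩
    · have : ((Rc u).card + 1) * N ≤ (Rc v).card * N := Nat.mul_le_mul_right _ h
      nlinarith
    · rw [h]; omega
  have hsub : ∀ u v, Relation.ReflTransGen D u v → Rc v ⊆ Rc u := by
    intro u v h w hw
    simp only [Rc, Finset.mem_filter, Finset.mem_univ, true_and] at hw ⊢
    exact h.trans hw
  let R : Set V := {r | ∀ v, Relation.ReflTransGen D r v → key r ≤ key v}
  have hback : ∀ r ∈ R, ∀ v, Relation.ReflTransGen D r v → Rc v = Rc r := by
    intro r hr v h
    apply Finset.eq_of_subset_of_card_le (hsub r v h)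
    by_contra hc
    exact absurd (hk v r (Or.inl (not_le.mp hc))) (not_lt.mpr (hr v h))
  have hbackr : ∀ r ∈ R, ∀ v, Relation.ReflTransGen D r v → Relation.ReflTransGen D v r := by
    intro r hr v h
    have : r ∈ Rc r := by simp [Rc, Relation.ReflTransGen.refl]
    rw [← hback r hr v h] at this
    simpa [Rc] using this
  have huniq : ∀ r ∈ R, ∀ r' ∈ R, Relation.ReflTransGen D r r' → r' = r := by
    intro r hr r' hr' h
    exact hkinj (le_antisymm (hr' r (hbackr r hr r' h)) (hr r' h))
  have hmin : ∀ r ∈ R, ∀ v, Relation.ReflTransGen D r v → ω r ≤ ω v := by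
    intro r hr v h
    by_contra hc
    exact absurd (hk v r (Or.inr ⟨by rw [hback r hr v h], not_le.mp hc⟩)) (not_lt.mpr (hr v h))
  have hreach : ∀ v, ∃ r ∈ R, Relation.ReflTransGen D v r := by
    intro v
    obtain ⟨m, hm, hmm⟩ := Finset.exists_min_image (Rc v) key
      ⟨v, by simp [Rc, Relation.ReflTransGen.refl]⟩
    have hm' : Relation.ReflTransGen D v m := by simpa [Rc] using hm
    refine ⟨m, fun w hw => hmm w ?_, hm'⟩
    simp only [Rc, Finset.mem_filter, Finset.mem_univ, true_and]
    exact hm'.trans hw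
  obtain ⟨S, hS0, hS1⟩ : ∃ S : ℕ → V → Prop, (∀ v, S 0 v ↔ v ∈ R) ∧
      (∀ n v, S (n + 1) v ↔ ∃ w, D v w ∧ S n w) :=
    ⟨fun n => Nat.rec (fun v => v ∈ R) (fun _ s v => ∃ w, D v w ∧ s w) n,
      fun _ => Iff.rfl, fun _ _ => Iff.rfl⟩
  have hS : ∀ v, ∃ n, S n v := by
    intro v
    obtain ⟨r, hr, h⟩ := hreach v
    induction h using Relation.ReflTransGen.head_induction_on with
    | refl => exact ⟨0, (hS0 _).mpr hr⟩
    | head h1 _ ih =>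
      obtain ⟨n, hn⟩ := ih
      exact ⟨n + 1, (hS1 _ _).mpr ⟨_, h1, hn⟩⟩
  let d : V → ℕ := fun v => Nat.find (hS v)
  have hd0 : ∀ v, v ∈ R → d v = 0 := fun v hv => (Nat.find_eq_zero (hS v)).mpr ((hS0 v).mpr hv)
  have hd0' : ∀ v, d v = 0 → v ∈ R := fun v hv => (hS0 v).mp ((Nat.find_eq_zero (hS v)).mp hv)
  have hn : ∀ v, ∃ w, v ∉ R → D v w ∧ d v = d w + 1 := by
    intro v
    by_cases hv : v ∈ R
    · exact ⟨v, fun h => absurd hv h⟩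
    · have h0 : d v ≠ 0 := fun h => hv (hd0' v h)
      obtain ⟨n, hn⟩ := Nat.exists_eq_succ_of_ne_zero h0
      have hs : S (d v) v := Nat.find_spec (hS v)
      rw [hn] at hs
      obtain ⟨w, hw, hsw⟩ := (hS1 _ _).mp hs
      refine ⟨w, fun _ => ⟨hw, ?_⟩⟩
      have h1 : d w ≤ n := Nat.find_min' (hS w) hsw
      have h2 : d v ≤ d w + 1 := Nat.find_min' (hS v) ((hS1 _ _).mpr ⟨w, hw, Nat.find_spec (hS w)⟩)
      omega
  choose nxt hnxt using hn
  let ρ : V → V := fun v => nxt^[d v] v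
  have hρ0 : ∀ v, v ∈ R → ρ v = v := by
    intro v hv
    simp [ρ, hd0 v hv]
  have hρ1 : ∀ v, v ∉ R → ρ v = ρ (nxt v) := by
    intro v hv
    simp only [ρ]
    rw [(hnxt v hv).2, Function.iterate_succ_apply]
  have hρ : ∀ n v, d v = n → ρ v ∈ R ∧ Relation.ReflTransGen D v (ρ v) := by
    intro n
    induction n with
    | zero =>
      intro v hv
      rw [hρ0 v (hd0' v hv)]
      exact ⟨hd0' v hv, Relation.ReflTransGen.refl⟩
    | succ n ih =>
      intro v hv
      have hvR : v ∉ R := fun h => by rw [hd0 v h] at hv; omega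
      obtain ⟨h1, h2⟩ := hnxt v hvR
      rw [hρ1 v hvR]
      obtain ⟨h3, h4⟩ := ih (nxt v) (by omega)
      exact ⟨h3, Relation.ReflTransGen.head h1 h4⟩
  refine ⟨R, d, ρ, nxt, fun v hv => ⟨(hnxt v hv).1, (hnxt v hv).2, hρ1 v hv⟩, hd0, hρ0,
    fun v => (hρ _ v rfl).1, fun r hr v h => ⟨?_, hmin r hr v h⟩⟩
  exact huniq r hr _ (hρ _ v rfl).1 (h.trans (hρ _ v rfl).2)

/-- `v` lies on the cycle of its root (or is itself a root). -/
def Cyc {V : Type*} (f : V → Option V) (r v : V) : Prop :=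
  Relation.ReflTransGen (fun a b => f a = some b) r v

section
variable {V : Type*} {f : V → Option V} {R : Set V} {d : V → ℕ} {ρ : V → V}

theorem Rooted.d_zero (H : Rooted f R d ρ) {v : V} (h : d v = 0) : v ∈ R := by
  by_contra hv
  obtain ⟨w, _, h2, _⟩ := H.step v hv
  omega

theorem Rooted.step' (H : Rooted f R d ρ) {v w : V} (hv : v ∉ R) (h : f v = some w) :
    d v = d w + 1 ∧ ρ v = ρ w := by
  obtain ⟨w', h1, h2⟩ := H.step v hv
  rw [h] at h1
  cases h1
  exact h2

theorem Rooted.cyc_root (H : Rooted f R d ρ) {r v : V} (hr : r ∈ R) (h : Cyc f r v) :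
    ρ v = r := by
  induction h with
  | refl => exact H.root_ρ r hr
  | tail h1 h2 ih =>
    rename_i b c
    by_cases hb : b ∈ R
    · rw [H.root_ρ b hb] at ih
      rw [H.root_next b hb c h2, ih]
    · rw [← (H.step' hb h2).2, ih]

theorem Rooted.cyc_eq (H : Rooted f R d ρ) {r v : V} (hr : r ∈ R) (h : Cyc f r v)
    (hv : v ∈ R) : v = r := by
  rw [← H.root_ρ v hv, H.cyc_root hr h]

theorem Rooted.cyc_le (H : Rooted f R d ρ) {r v w : V} (hr : r ∈ R) (h : Cyc f r v)
    (hw : f r = some w) : d v ≤ d w := by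
  induction h with
  | refl => rw [H.root_d r hr]; omega
  | tail h1 h2 ih =>
    rename_i b c
    by_cases hb : b ∈ R
    · have := H.cyc_eq hr h1 hb
      subst this
      rw [hw] at h2
      cases h2
      exact le_rfl
    · have := (H.step' hb h2).1
      omega

theorem Rooted.cyc_inj (H : Rooted f R d ρ) {r u v : V} (hr : r ∈ R) (hu : Cyc f r u)
    (hv : Cyc f r v) (h : d v = d u) : v = u := by
  induction hu generalizing v with
  | refl =>
    rw [H.root_d r hr] at h
    exact H.cyc_eq hr hv (H.d_zero h)
  | tail h1 h2 ih =>
    rename_i p u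
    have hu : Cyc f r u := Relation.ReflTransGen.tail h1 h2
    by_cases huR : u ∈ R
    · rw [H.root_d u huR] at h
      rw [H.cyc_eq hr hu huR, H.cyc_eq hr hv (H.d_zero h)]
    · have huR' : d u ≠ 0 := fun h => huR (H.d_zero h)
      rcases Relation.ReflTransGen.cases_tail hv with h3 | ⟨q, hq, hqv⟩
      · subst h3
        rw [H.root_d _ hr] at h
        omega
      · by_cases hp : p ∈ R
        · have := H.cyc_eq hr h1 hp
          subst this
          by_cases hq' : q ∈ R
          · have := H.cyc_eq hr hq hq'
            subst this
            rw [hqv] at h2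
            exact Option.some.inj h2
          · have h4 := (H.step' hq' hqv).1
            have h5 := H.cyc_le hr hq h2
            omega
        · have h6 := (H.step' hp h2).1
          by_cases hq' : q ∈ R
          · have := H.cyc_eq hr hq hq'
            subst this
            have h5 := H.cyc_le hr h1 hqv
            omega
          · have h4 := (H.step' hq' hqv).1
            have := ih hq (by omega)
            subst this
            rw [hqv] at h2
            exact Option.some.inj h2

theorem Rooted.levels [Fintype V] (H : Rooted f R d ρ) (X Y : V → ℕ)
    (hX : Function.Injective X)
    (hXr : ∀ r ∈ R, ∀ u, Cyc f r u → u ≠ r → X r < X u)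
    (hYr : ∀ r ∈ R, ∀ u, Cyc f r u → u ≠ r → Y r < Y u)
    (hXd : ∀ r ∈ R, ∀ u v, Cyc f r u → Cyc f r v → u ∉ R → v ∉ R → d v < d u → X u < X v) :
    ∃ h : V → ℕ, (∀ u v, f u = some v → h u ≤ h v) ∧
      (∀ u v, u ≠ v → h u = h v → ∃ u' v', f u = some u' ∧ f v = some v' ∧ u' ≠ v' ∧
        (min (X v) (X v') ≤ X u → X u ≤ max (X v) (X v') →
          min (Y u) (Y u') ≤ Y v' → Y v' ≤ max (Y u) (Y u') → v' = u)) := by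
  classical
  let M := Finset.univ.sup d
  have hM : ∀ v, d v ≤ M := fun v => Finset.le_sup (Finset.mem_univ v)
  obtain ⟨K, hKi, hK⟩ := exists_key
    (fun v => if Cyc f (ρ v) v then M + 1 else M - d v)
  -- `K` for non-cyclic vertices; cyclic ones use the key of their root
  let h : V → ℕ := fun v => if Cyc f (ρ v) v then K (ρ v) else K v
  have hroot : ∀ v, Cyc f (ρ (ρ v)) (ρ v) := by
    intro v
    rw [H.root_ρ _ (H.mem v)]
    exact Relation.ReflTransGen.refl
  refine ⟨h, ?_, ?_⟩
  · intro u v huv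
    by_cases hu : Cyc f (ρ u) u
    · have hv : Cyc f (ρ u) v := Relation.ReflTransGen.tail hu huv
      have : ρ v = ρ u := H.cyc_root (H.mem u) hv
      simp only [h]
      rw [if_pos hu, this, if_pos hv]
    · have huR : u ∉ R := by
        intro hR
        apply hu
        rw [H.root_ρ u hR]
        exact Relation.ReflTransGen.refl
      have h1 := H.step' huR huv
      have h2 := hM u
      by_cases hv : Cyc f (ρ v) v
      · simp only [h]
        rw [if_neg hu, if_pos hv]
        apply le_of_lt
        apply hK
        rw [if_neg hu, if_pos (hroot v)]
        omega
      · simp only [h]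
        rw [if_neg hu, if_neg hv]
        apply le_of_lt
        apply hK
        rw [if_neg hu, if_neg hv]
        omega
  · intro u v huv he
    have key : Cyc f (ρ u) u ∧ Cyc f (ρ v) v ∧ ρ u = ρ v := by
      simp only [h] at he
      by_cases hu : Cyc f (ρ u) u <;> by_cases hv : Cyc f (ρ v) v
      · rw [if_pos hu, if_pos hv] at he
        exact ⟨hu, hv, hKi he⟩
      · rw [if_pos hu, if_neg hv] at he
        have := hKi he
        exact absurd (this ▸ hroot u) hv
      · rw [if_neg hu, if_pos hv] at he
        have := hKi he
        exact absurd (this ▸ hroot v) hu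
      · rw [if_neg hu, if_neg hv] at he
        exact absurd (hKi he) huv
    obtain ⟨hu, hv, hρ⟩ := key
    rw [← hρ] at hv
    have hr := H.mem u
    generalize ρ u = r at hu hv hr
    clear he hρ
    have hsome : ∀ u v, u ≠ v → Cyc f r u → Cyc f r v → ∃ u', f u = some u' := by
      intro u v huv hu hv
      by_cases hR : u ∈ R
      · have := H.cyc_eq hr hu hR
        subst this
        rcases Relation.ReflTransGen.cases_head hv with h3 | ⟨q, hq, hqv⟩
        · exact absurd h3 huv
        · exact ⟨q, hq⟩
      · obtain ⟨w, hw, _⟩ := H.step u hR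
        exact ⟨w, hw⟩
    obtain ⟨u', hu'⟩ := hsome u v huv hu hv
    obtain ⟨v', hv'⟩ := hsome v u huv.symm hv hu
    have hcu' : Cyc f r u' := Relation.ReflTransGen.tail hu hu'
    have hcv' : Cyc f r v' := Relation.ReflTransGen.tail hv hv'
    have hne : u' ≠ v' := by
      rintro rfl
      by_cases h1 : u ∈ R <;> by_cases h2 : v ∈ R
      · exact huv ((H.cyc_eq hr hu h1).trans (H.cyc_eq hr hv h2).symm)
      · have := H.cyc_eq hr hu h1
        subst this
        have h3 := H.cyc_le hr hv hu'
        have h4 := (H.step' h2 hv').1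
        omega
      · have := H.cyc_eq hr hv h2
        subst this
        have h3 := H.cyc_le hr hu hv'
        have h4 := (H.step' h1 hu').1
        omega
      · have h3 := (H.step' h1 hu').1
        have h4 := (H.step' h2 hv').1
        exact huv (H.cyc_inj hr hv hu (by omega))
    refine ⟨u', v', hu', hv', hne, ?_⟩
    intro h1 h2 h3 h4
    by_contra hc
    by_cases hvr : v' = r
    · have h5 : Y v' < Y u := by
        rw [hvr]; exact hYr r hr u hu (fun h => hc (hvr.trans h.symm))
      have h6 : Y v' < Y u' := by
        rw [hvr]; exact hYr r hr u' hcu' (fun h => hne (h.trans hvr.symm))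
      omega
    · have hv'R : v' ∉ R := fun h => hvr (H.cyc_eq hr hcv' h)
      have e1 : X u ≠ X v := fun h => huv (hX h)
      have e2 : X u ≠ X v' := fun h => hc (hX h).symm
      have e3 : d u ≠ d v := fun h => huv (H.cyc_inj hr hv hu h)
      have e4 : d u ≠ d v' := fun h => hc (H.cyc_inj hr hcv' hu h).symm
      have h5 : u ≠ r → d u < d v' → X v' < X u := fun a b =>
        hXd r hr v' u hcv' hu hv'R (fun h => a (H.cyc_eq hr hu h)) b
      by_cases hvr2 : v = r
      · subst hvr2
        have h6 := hXr v hr v' hcv' hvr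
        have h7 := hXr v hr u hu huv
        have h8 := H.cyc_le hr hu hv'
        have h9 := h5 huv (by omega)
        omega
      · have hvR : v ∉ R := fun h => hvr2 (H.cyc_eq hr hv h)
        have h6 := (H.step' hvR hv').1
        have h7 := hXd r hr v v' hv hcv' hvR hv'R (by omega)
        by_cases hur : u = r
        · subst hur
          have := hXr u hr v hv hvr2
          omega
        · have huR : u ∉ R := fun h => hur (H.cyc_eq hr hu h)
          rcases lt_or_gt_of_ne e4 with h8 | h8
          · have := h5 hur h8
            omega
          · have := hXd r hr u v hu hv huR hvR (by omega)
            omega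
end

theorem exists_orientation {V : Type*} [Fintype V] [DecidableEq V]
    (G : SimpleGraph V) [DecidableRel G.Adj] (hdeg : ∀ v : V, G.degree v ≤ 4) :
    ∃ o : V → Bool → Option V, (∀ v b w, o v b = some w → G.Adj v w) ∧
      (∀ v w, G.Adj v w → ∃ b, o v b = some w ∨ o w b = some v) := by
  classical
  let t : G.edgeSet → Finset (V × Bool) := fun e => Finset.univ.filter (fun p => p.1 ∈ (e : Sym2 V))
  have hall : ∀ s : Finset G.edgeSet, s.card ≤ (s.biUnion t).card := by
    intro s
    let T : Finset V := Finset.univ.filter (fun v => ∃ e ∈ s, v ∈ (e : Sym2 V))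
    have h1 : s.biUnion t = T ×ˢ (Finset.univ : Finset Bool) := by
      ext ⟨v, b⟩
      simp [t, T]
    rw [h1, Finset.card_product, Finset.card_univ, Fintype.card_bool]
    have h2 := Finset.sum_card_bipartiteAbove_eq_sum_card_bipartiteBelow
      (s := s) (t := T) (fun (e : G.edgeSet) (v : V) => v ∈ (e : Sym2 V))
    have h3 : ∀ e ∈ s, (T.bipartiteAbove (fun (e : G.edgeSet) (v : V) => v ∈ (e : Sym2 V)) e).card
        = 2 := by
      intro e he
      have : T.bipartiteAbove (fun (e : G.edgeSet) (v : V) => v ∈ (e : Sym2 V)) e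
          = (e : Sym2 V).toFinset := by
        ext v
        simp only [Finset.bipartiteAbove, T, Finset.mem_filter, Finset.mem_univ, true_and,
          Sym2.mem_toFinset]
        exact ⟨fun h => h.2, fun h => ⟨⟨e, he, h⟩, h⟩⟩
      rw [this]
      exact Sym2.card_toFinset_of_not_isDiag _ (G.not_isDiag_of_mem_edgeSet e.2)
    have h4 : ∀ v ∈ T, (s.bipartiteBelow (fun (e : G.edgeSet) (v : V) => v ∈ (e : Sym2 V)) v).card
        ≤ 4 := by
      intro v _
      refine le_trans ?_ (hdeg v)
      rw [← G.card_incidenceFinset_eq_degree v]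
      apply Finset.card_le_card_of_injOn (fun e : G.edgeSet => (e : Sym2 V))
      · intro e he
        simp only [Finset.bipartiteBelow, Finset.coe_filter, Set.mem_ofPred_eq] at he
        simp [SimpleGraph.incidenceSet, he.2, e.2]
      · intro a _ b _ h
        exact Subtype.ext h
    rw [Finset.sum_congr rfl h3] at h2
    have h5 := Finset.sum_le_sum h4
    rw [← h2] at h5
    simp only [Finset.sum_const, smul_eq_mul] at h5
    omega
  obtain ⟨φ, hφ, hφm⟩ := (Finset.all_card_le_biUnion_card_iff_exists_injective t).mp hall
  have hm : ∀ e : G.edgeSet, (φ e).1 ∈ (e : Sym2 V) := by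
    intro e
    simpa [t] using hφm e
  have ho : ∀ v b, ∃ x : Option V, ∀ w, x = some w ↔ ∃ e, φ e = (v, b) ∧ (e : Sym2 V) = s(v, w) := by
    intro v b
    by_cases h : ∃ e, φ e = (v, b)
    · obtain ⟨e, he⟩ := h
      have := hm e
      rw [he] at this
      obtain ⟨w, hw⟩ := Sym2.mem_iff_exists.mp this
      refine ⟨some w, fun w' => ⟨?_, ?_⟩⟩
      · intro h
        cases h
        exact ⟨e, he, hw⟩
      · rintro ⟨e', he', hw'⟩
        have : e' = e := hφ (he'.trans he.symm)
        subst this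
        rw [hw] at hw'
        rw [Sym2.congr_right.mp hw']
    · refine ⟨none, fun w => ⟨fun h => by simp at h, ?_⟩⟩
      rintro ⟨e, he, _⟩
      exact absurd ⟨e, he⟩ h
  choose o ho using ho
  refine ⟨o, ?_, ?_⟩
  · intro v b w h
    obtain ⟨e, _, he⟩ := (ho v b w).mp h
    have := e.2
    rw [he] at this
    exact this
  · intro v w h
    let e : G.edgeSet := ⟨s(v, w), h⟩
    refine ⟨(φ e).2, ?_⟩
    have := hm e
    rcases Sym2.mem_iff.mp this with h1 | h1
    · left
      rw [ho]
      exact ⟨e, by rw [← h1], rfl⟩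
    · right
      rw [ho]
      exact ⟨e, by rw [← h1], Sym2.eq_swap⟩

theorem exists_layout {V : Type*} [Fintype V] [DecidableEq V]
    (G : SimpleGraph V) [DecidableRel G.Adj] (hdeg : ∀ v : V, G.degree v ≤ 4) :
    ∃ (f g : V → Option V) (X Y h k : V → ℕ), Function.Injective X ∧ Function.Injective Y ∧
      (∀ u v, f u = some v → G.Adj u v) ∧ (∀ u v, g u = some v → G.Adj u v) ∧
      (∀ u v, G.Adj u v → (f u = some v ∨ g u = some v) ∨ (f v = some u ∨ g v = some u)) ∧
      (∀ u v, f u = some v → h u ≤ h v) ∧ (∀ u v, g u = some v → k u ≤ k v) ∧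
      (∀ u v, u ≠ v → h u = h v → ∃ u' v', f u = some u' ∧ f v = some v' ∧ u' ≠ v' ∧
        (min (X v) (X v') ≤ X u → X u ≤ max (X v) (X v') →
          min (Y u) (Y u') ≤ Y v' → Y v' ≤ max (Y u) (Y u') → v' = u)) ∧
      (∀ u v, u ≠ v → k u = k v → ∃ u' v', g u = some u' ∧ g v = some v' ∧ u' ≠ v' ∧
        (min (Y v) (Y v') ≤ Y u → Y u ≤ max (Y v) (Y v') →
          min (X u) (X u') ≤ X v' → X v' ≤ max (X u) (X u') → v' = u)) := by
  classical
  obtain ⟨o, ho1, ho2⟩ := exists_orientation G hdeg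
  let D : V → V → Prop := fun v w => ∃ b, o v b = some w
  obtain ⟨R, d, ρ, nxt, hn, hd0, hρ0, hρR, hRr⟩ := exists_roots D (fun _ => 0)
  have hβ : ∀ v, ∃ b, v ∉ R → o v b = some (nxt v) := by
    intro v
    by_cases hv : v ∈ R
    · exact ⟨true, fun h => absurd hv h⟩
    · obtain ⟨b, hb⟩ := (hn v hv).1
      exact ⟨b, fun _ => hb⟩
  choose β hβ using hβ
  let f : V → Option V := fun v => o v (β v)
  let g : V → Option V := fun v => o v (!β v)
  have Hf : Rooted f R d ρ :=
    { step := fun v hv => ⟨nxt v, hβ v hv, (hn v hv).2⟩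
      root_d := hd0
      root_ρ := hρ0
      root_next := fun v hv w hw => (hRr v hv w (Relation.ReflTransGen.single ⟨_, hw⟩)).1
      mem := hρR }
  let M := Finset.univ.sup d
  have hM : ∀ v, d v ≤ M := fun v => Finset.le_sup (Finset.mem_univ v)
  obtain ⟨X, hX, hXc⟩ := exists_key (fun v => if v ∈ R then 0 else M + 1 - d v)
  have hXR : ∀ u v, u ∈ R → v ∉ R → X u < X v := by
    intro u v hu hv
    apply hXc
    rw [if_pos hu, if_neg hv]
    have := hM v
    omega
  obtain ⟨C, e, σ, nxt', hn', he0, hσ0, hσC, hCr⟩ :=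
    exists_roots (fun a b => g a = some b) X
  have Hg : Rooted g C e σ :=
    { step := fun v hv => ⟨nxt' v, hn' v hv⟩
      root_d := he0
      root_ρ := hσ0
      root_next := fun v hv w hw => (hCr v hv w (Relation.ReflTransGen.single hw)).1
      mem := hσC }
  let M' := Finset.univ.sup e
  have hM' : ∀ v, e v ≤ M' := fun v => Finset.le_sup (Finset.mem_univ v)
  obtain ⟨Y, hY, hYc⟩ := exists_key
    (fun v => if v ∈ R then 0 else if v ∈ C then 1 else M' + 2 - e v)
  have hgD : ∀ a b, Cyc g a b → Relation.ReflTransGen D a b := fun a b h =>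
    Relation.ReflTransGen.mono (fun a b (h : g a = some b) => ⟨_, h⟩) a b h
  have hCX : ∀ c ∈ C, ∀ u, Cyc g c u → u ≠ c → X c < X u := by
    intro c hc u hu hne
    exact lt_of_le_of_ne (hCr c hc u hu).2 (fun h => hne (hX h).symm)
  have hCR : ∀ c ∈ C, ∀ u, Cyc g c u → u ≠ c → u ∉ R := by
    intro c hc u hu hne huR
    by_cases hcR : c ∈ R
    · have := (hRr c hcR u (hgD c u hu)).1
      rw [hρ0 u huR] at this
      exact hne this
    · have h1 := hXR u c huR hcR
      have h2 := hCX c hc u hu hne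
      omega
  obtain ⟨h, hh1, hh2⟩ := Hf.levels X Y hX
    (fun r hr u hu hne => hXR r u hr (fun h => hne (Hf.cyc_eq hr hu h)))
    (fun r hr u hu hne => by
      have huR : u ∉ R := fun h => hne (Hf.cyc_eq hr hu h)
      apply hYc
      rw [if_pos hr, if_neg huR]
      have := hM' u
      split_ifs <;> omega)
    (fun r hr u v hu hv huR hvR hlt => by
      apply hXc
      rw [if_neg huR, if_neg hvR]
      have := hM u
      omega)
  obtain ⟨k, hk1, hk2⟩ := Hg.levels Y X hY
    (fun c hc u hu hne => by
      have huR := hCR c hc u hu hne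
      have huC : u ∉ C := fun h => hne (Hg.cyc_eq hc hu h)
      apply hYc
      rw [if_neg huR, if_neg huC, if_pos hc]
      have := hM' u
      split_ifs <;> omega)
    hCX
    (fun c hc u v hu hv huC hvC hlt => by
      have huR := hCR c hc u hu (fun h => huC (h ▸ hc))
      have hvR := hCR c hc v hv (fun h => hvC (h ▸ hc))
      apply hYc
      rw [if_neg huR, if_neg huC, if_neg hvR, if_neg hvC]
      have := hM' u
      omega)
  have hfg : ∀ u v b, o u b = some v → f u = some v ∨ g u = some v := by
    intro u v b hb
    by_cases hbb : b = β u
    · left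
      rw [hbb] at hb
      exact hb
    · right
      have : b = !β u := Bool.eq_not.mpr hbb
      rw [this] at hb
      exact hb
  refine ⟨f, g, X, Y, h, k, hX, hY, fun u v => ho1 u _ v, fun u v => ho1 u _ v, ?_,
    hh1, hk1, hh2, hk2⟩
  intro u v huv
  obtain ⟨b, hb | hb⟩ := ho2 u v huv
  · exact Or.inl (hfg u v b hb)
  · exact Or.inr (hfg v u b hb)

theorem mem_seg0 (a b y z : ℝ) (p : Pt3) :
    p ∈ segment ℝ (![a, y, z] : Pt3) ![b, y, z] ↔ p 0 ∈ uIcc a b ∧ p 1 = y ∧ p 2 = z := by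
  have h := Pi.image_update_segment (𝕜 := ℝ) 0 a b (![a, y, z] : Pt3)
  have h1 : Function.update (![a, y, z] : Pt3) 0 a = ![a, y, z] := by ext i; fin_cases i <;> rfl
  have h2 : Function.update (![a, y, z] : Pt3) 0 b = ![b, y, z] := by ext i; fin_cases i <;> rfl
  rw [h1, h2] at h
  rw [← h, segment_eq_uIcc]
  constructor
  · rintro ⟨t, ht, rfl⟩
    exact ⟨ht, rfl, rfl⟩
  · rintro ⟨h3, h4, h5⟩
    refine ⟨p 0, h3, ?_⟩
    ext i; fin_cases i
    · rfl
    · exact h4.symm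
    · exact h5.symm

theorem mem_seg1 (a b x z : ℝ) (p : Pt3) :
    p ∈ segment ℝ (![x, a, z] : Pt3) ![x, b, z] ↔ p 0 = x ∧ p 1 ∈ uIcc a b ∧ p 2 = z := by
  have h := Pi.image_update_segment (𝕜 := ℝ) 1 a b (![x, a, z] : Pt3)
  have h1 : Function.update (![x, a, z] : Pt3) 1 a = ![x, a, z] := by ext i; fin_cases i <;> rfl
  have h2 : Function.update (![x, a, z] : Pt3) 1 b = ![x, b, z] := by ext i; fin_cases i <;> rfl
  rw [h1, h2] at h
  rw [← h, segment_eq_uIcc]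
  constructor
  · rintro ⟨t, ht, rfl⟩
    exact ⟨rfl, ht, rfl⟩
  · rintro ⟨h3, h4, h5⟩
    refine ⟨p 1, h4, ?_⟩
    ext i; fin_cases i
    · exact h3.symm
    · rfl
    · exact h5.symm

theorem mem_seg2 (a b x y : ℝ) (p : Pt3) :
    p ∈ segment ℝ (![x, y, a] : Pt3) ![x, y, b] ↔ p 0 = x ∧ p 1 = y ∧ p 2 ∈ uIcc a b := by
  have h := Pi.image_update_segment (𝕜 := ℝ) 2 a b (![x, y, a] : Pt3)
  have h1 : Function.update (![x, y, a] : Pt3) 2 a = ![x, y, a] := by ext i; fin_cases i <;> rfl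
  have h2 : Function.update (![x, y, a] : Pt3) 2 b = ![x, y, b] := by ext i; fin_cases i <;> rfl
  rw [h1, h2] at h
  rw [← h, segment_eq_uIcc]
  constructor
  · rintro ⟨t, ht, rfl⟩
    exact ⟨rfl, rfl, ht⟩
  · rintro ⟨h3, h4, h5⟩
    refine ⟨p 2, h5, ?_⟩
    ext i; fin_cases i
    · exact h3.symm
    · exact h4.symm
    · rfl

theorem pt3_eq_iff (p : Pt3) (a b c : ℝ) : p = ![a, b, c] ↔ p 0 = a ∧ p 1 = b ∧ p 2 = c := by
  constructor
  · rintro rfl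
    exact ⟨rfl, rfl, rfl⟩
  · rintro ⟨h1, h2, h3⟩
    ext i; fin_cases i
    · exact h1
    · exact h2
    · exact h3

/-- The corner points of the string of a vertex at `(x, y)` with top level `h`, bottom level
`-k`, top target `(tx, ty)` and bottom target `(sx, sy)`. -/
def corner (x y h k tx ty sx sy : ℝ) : Fin 6 → Pt3 :=
  ![![tx, ty, h], ![x, ty, h], ![x, y, h], ![x, y, -k], ![sx, y, -k], ![sx, sy, -k]]

/-- Membership in the five segments. -/
def inSeg (x y h k tx ty sx sy : ℝ) (p : Pt3) : Fin 5 → Prop :=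
  ![p 0 ∈ uIcc tx x ∧ p 1 = ty ∧ p 2 = h,
    p 0 = x ∧ p 1 ∈ uIcc ty y ∧ p 2 = h,
    p 0 = x ∧ p 1 = y ∧ p 2 ∈ uIcc h (-k),
    p 0 ∈ uIcc x sx ∧ p 1 = y ∧ p 2 = -k,
    p 0 = sx ∧ p 1 ∈ uIcc y sy ∧ p 2 = -k]

theorem mem_corner (x y h k tx ty sx sy : ℝ) (p : Pt3) (i : Fin 5) :
    p ∈ segment ℝ (corner x y h k tx ty sx sy i.castSucc) (corner x y h k tx ty sx sy i.succ) ↔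
      inSeg x y h k tx ty sx sy p i := by
  fin_cases i
  · exact mem_seg0 _ _ _ _ p
  · exact mem_seg1 _ _ _ _ p
  · exact mem_seg2 _ _ _ _ p
  · exact mem_seg0 _ _ _ _ p
  · exact mem_seg1 _ _ _ _ p

/-- The string with the given corners. -/
def mkString (x y h k tx ty sx sy : ℝ) (hh : 0 < h) (hk : 0 < k) (htx : tx ≠ x) (hty : ty ≠ y)
    (hsx : sx ≠ x) (hsy : sy ≠ y) : AAString where
  k := 5
  pts := corner x y h k tx ty sx sy
  k_pos := by norm_num
  consec_ne := by
    intro i hi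
    fin_cases i
    · exact htx (congrFun hi 0)
    · exact hty (congrFun hi 1)
    · have : h = -k := congrFun hi 2
      linarith
    · exact hsx (congrFun hi 0).symm
    · exact hsy (congrFun hi 1).symm
  axis := by
    intro i
    fin_cases i
    · exact ⟨0, fun j hj => by fin_cases j <;> first | exact absurd rfl hj | exact sub_self _⟩
    · exact ⟨1, fun j hj => by fin_cases j <;> first | exact absurd rfl hj | exact sub_self _⟩
    · exact ⟨2, fun j hj => by fin_cases j <;> first | exact absurd rfl hj | exact sub_self _⟩
    · exact ⟨0, fun j hj => by fin_cases j <;> first | exact absurd rfl hj | exact sub_self _⟩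
    · exact ⟨1, fun j hj => by fin_cases j <;> first | exact absurd rfl hj | exact sub_self _⟩
  simple_consec := by
    intro i j hij
    ext p
    rw [mem_inter_iff, mem_corner, mem_corner, mem_singleton_iff]
    fin_cases i <;> fin_cases j <;> simp at hij
    · refine Iff.trans ?_ (pt3_eq_iff p x ty h).symm
      change (p 0 ∈ uIcc tx x ∧ p 1 = ty ∧ p 2 = h) ∧ (p 0 = x ∧ p 1 ∈ uIcc ty y ∧ p 2 = h) ↔ _
      refine ⟨fun H => ⟨H.2.1, H.1.2.1, H.1.2.2⟩, fun ⟨h1, h2, h3⟩ => ?_⟩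
      rw [h1, h2]
      simp [h3]
    · refine Iff.trans ?_ (pt3_eq_iff p x y h).symm
      change (p 0 = x ∧ p 1 ∈ uIcc ty y ∧ p 2 = h) ∧ (p 0 = x ∧ p 1 = y ∧ p 2 ∈ uIcc h (-k)) ↔ _
      refine ⟨fun H => ⟨H.1.1, H.2.2.1, H.1.2.2⟩, fun ⟨h1, h2, h3⟩ => ?_⟩
      rw [h2, h3]
      simp [h1]
    · refine Iff.trans ?_ (pt3_eq_iff p x y (-k)).symm
      change (p 0 = x ∧ p 1 = y ∧ p 2 ∈ uIcc h (-k)) ∧ (p 0 ∈ uIcc x sx ∧ p 1 = y ∧ p 2 = -k) ↔ _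
      refine ⟨fun H => ⟨H.1.1, H.2.2.1, H.2.2.2⟩, fun ⟨h1, h2, h3⟩ => ?_⟩
      rw [h1, h3]
      simp [h2]
    · refine Iff.trans ?_ (pt3_eq_iff p sx y (-k)).symm
      change (p 0 ∈ uIcc x sx ∧ p 1 = y ∧ p 2 = -k) ∧ (p 0 = sx ∧ p 1 ∈ uIcc y sy ∧ p 2 = -k) ↔ _
      refine ⟨fun H => ⟨H.2.1, H.1.2.1, H.2.2.2⟩, fun ⟨h1, h2, h3⟩ => ?_⟩
      rw [h1, h2]
      simp [h3]
  simple_far := by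
    intro i j hij
    ext p
    rw [mem_inter_iff, mem_corner, mem_corner]
    refine ⟨fun H => ?_, fun H => absurd H (notMem_empty p)⟩
    exfalso
    fin_cases i <;> fin_cases j <;> simp at hij
    · exact hty (H.1.2.1.symm.trans H.2.2.1)
    · have h1 : p 2 = h := H.1.2.2
      have h2 : p 2 = -k := H.2.2.2
      linarith
    · have h1 : p 2 = h := H.1.2.2
      have h2 : p 2 = -k := H.2.2.2
      linarith
    · have h1 : p 2 = h := H.1.2.2
      have h2 : p 2 = -k := H.2.2.2
      linarith
    · have h1 : p 2 = h := H.1.2.2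
      have h2 : p 2 = -k := H.2.2.2
      linarith
    · exact hsx (H.2.1.symm.trans H.1.1)

theorem mem_mkString {x y h k tx ty sx sy : ℝ} {hh : 0 < h} {hk : 0 < k} {htx : tx ≠ x}
    {hty : ty ≠ y} {hsx : sx ≠ x} {hsy : sy ≠ y} (p : Pt3) :
    p ∈ (mkString x y h k tx ty sx sy hh hk htx hty hsx hsy).carrier ↔
      (p 0 ∈ uIcc x tx ∧ p 1 = ty ∧ p 2 = h) ∨
      (p 0 = x ∧ p 1 ∈ uIcc y ty ∧ p 2 = h) ∨
      (p 0 = x ∧ p 1 = y ∧ p 2 ∈ Icc (-k) h) ∨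
      (p 0 ∈ uIcc x sx ∧ p 1 = y ∧ p 2 = -k) ∨
      (p 0 = sx ∧ p 1 ∈ uIcc y sy ∧ p 2 = -k) := by
  have h1 : p ∈ (mkString x y h k tx ty sx sy hh hk htx hty hsx hsy).carrier ↔
      ∃ i : Fin 5, inSeg x y h k tx ty sx sy p i := by
    unfold AAString.carrier
    rw [mem_iUnion]
    exact exists_congr (fun i => mem_corner x y h k tx ty sx sy p i)
  rw [h1]
  simp only [Fin.exists_fin_succ, inSeg, uIcc_comm tx x, uIcc_comm ty y,
    uIcc_comm h (-k), uIcc_of_le (show -k ≤ h by linarith)]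
  simp

/-- Geometric part of the construction. -/
theorem geometry {V : Type*} (G : SimpleGraph V) (f g : V → Option V)
    (x y h k tx ty sx sy : V → ℝ) (hx : Function.Injective x) (hy : Function.Injective y)
    (hh : ∀ v, 0 < h v) (hk : ∀ v, 0 < k v)
    (htx : ∀ v, tx v ≠ x v) (hty : ∀ v, ty v ≠ y v)
    (hsx : ∀ v, sx v ≠ x v) (hsy : ∀ v, sy v ≠ y v)
    (hfG : ∀ u v, f u = some v → G.Adj u v) (hgG : ∀ u v, g u = some v → G.Adj u v)
    (hG : ∀ u v, G.Adj u v → (f u = some v ∨ g u = some v) ∨ (f v = some u ∨ g v = some u))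
    (hf : ∀ u v, f u = some v → tx u = x v ∧ ty u = y v ∧ h u ≤ h v)
    (hg : ∀ u v, g u = some v → sx u = x v ∧ sy u = y v ∧ k u ≤ k v)
    (hf' : ∀ u v, ty u = y v → f u = some v) (hg' : ∀ u v, sx u = x v → g u = some v)
    (hT : ∀ u v, u ≠ v → h u = h v → ty u ≠ ty v ∧
      (x u ∈ uIcc (x v) (tx v) → ty v ∈ uIcc (y u) (ty u) → f v = some u))
    (hB : ∀ u v, u ≠ v → k u = k v → sx u ≠ sx v ∧
      (y u ∈ uIcc (y v) (sy v) → sx v ∈ uIcc (x u) (sx u) → g v = some u)) :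
    ∃ Ψ : V → AAString, IsStringContactRep G Ψ ∧ ∀ v : V, (Ψ v).bends ≤ 4 := by
  let Ψ : V → AAString := fun v => mkString (x v) (y v) (h v) (k v) (tx v) (ty v) (sx v) (sy v)
    (hh v) (hk v) (htx v) (hty v) (hsx v) (hsy v)
  have hmem : ∀ v p, p ∈ (Ψ v).carrier ↔
      (p 0 ∈ uIcc (x v) (tx v) ∧ p 1 = ty v ∧ p 2 = h v) ∨
      (p 0 = x v ∧ p 1 ∈ uIcc (y v) (ty v) ∧ p 2 = h v) ∨
      (p 0 = x v ∧ p 1 = y v ∧ p 2 ∈ Icc (-k v) (h v)) ∨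
      (p 0 ∈ uIcc (x v) (sx v) ∧ p 1 = y v ∧ p 2 = -k v) ∨
      (p 0 = sx v ∧ p 1 ∈ uIcc (y v) (sy v) ∧ p 2 = -k v) := fun v p => mem_mkString p
  let T : V → V → Pt3 → Prop := fun u v p =>
    (f u = some v ∧ p 0 = x v ∧ p 1 = y v ∧ p 2 = h u) ∨
    (g u = some v ∧ p 0 = x v ∧ p 1 = y v ∧ p 2 = -k u)
  have hTe : ∀ u v p, T u v p → p ∈ (Ψ u).endpoints := by
    intro u v p H
    rcases H with ⟨h1, h2, h3, h4⟩ | ⟨h1, h2, h3, h4⟩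
    · left
      obtain ⟨h5, h6, _⟩ := hf u v h1
      exact (pt3_eq_iff p (tx u) (ty u) (h u)).mpr ⟨h2.trans h5.symm, h3.trans h6.symm, h4⟩
    · right
      obtain ⟨h5, h6, _⟩ := hg u v h1
      exact (pt3_eq_iff p (sx u) (sy u) (-k u)).mpr ⟨h2.trans h5.symm, h3.trans h6.symm, h4⟩
  have hTa : ∀ u v p, T u v p → G.Adj u v := by
    intro u v p H
    rcases H with ⟨h1, _⟩ | ⟨h1, _⟩
    · exact hfG u v h1
    · exact hgG u v h1
  have hTx : ∀ u v p, T u v p → p 0 = x v := by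
    intro u v p H
    rcases H with ⟨_, h1, _⟩ | ⟨_, h1, _⟩ <;> exact h1
  -- half of the case analysis; the order of the pieces is top, vertical, bottom
  have top_vert : ∀ u v p, u ≠ v →
      ((p 0 ∈ uIcc (x u) (tx u) ∧ p 1 = ty u ∧ p 2 = h u) ∨
       (p 0 = x u ∧ p 1 ∈ uIcc (y u) (ty u) ∧ p 2 = h u)) →
      p 0 = x v → p 1 = y v → T u v p := by
    intro u v p huv H h0 h1
    rcases H with ⟨_, h3, h4⟩ | ⟨h2, _, _⟩
    · exact Or.inl ⟨hf' u v (h3.symm.trans h1), h0, h1, h4⟩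
    · exact absurd (hx (h2.symm.trans h0)) huv
  have bot_vert : ∀ u v p, u ≠ v →
      ((p 0 ∈ uIcc (x u) (sx u) ∧ p 1 = y u ∧ p 2 = -k u) ∨
       (p 0 = sx u ∧ p 1 ∈ uIcc (y u) (sy u) ∧ p 2 = -k u)) →
      p 0 = x v → p 1 = y v → T u v p := by
    intro u v p huv H h0 h1
    rcases H with ⟨_, h3, _⟩ | ⟨h2, _, h4⟩
    · exact absurd (hy (h3.symm.trans h1)) huv
    · exact Or.inr ⟨hg' u v (h2.symm.trans h0), h0, h1, h4⟩
  have top_cross : ∀ u v p, u ≠ v →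
      (p 0 = x u ∧ p 1 ∈ uIcc (y u) (ty u) ∧ p 2 = h u) →
      (p 0 ∈ uIcc (x v) (tx v) ∧ p 1 = ty v ∧ p 2 = h v) → T v u p := by
    rintro u v p huv ⟨h1, h2, h3⟩ ⟨h4, h5, h6⟩
    have h7 := (hT u v huv (h3.symm.trans h6)).2 (h1 ▸ h4) (h5 ▸ h2)
    exact Or.inl ⟨h7, h1, h5.trans (hf v u h7).2.1, h6⟩
  have bot_cross : ∀ u v p, u ≠ v →
      (p 0 ∈ uIcc (x u) (sx u) ∧ p 1 = y u ∧ p 2 = -k u) →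
      (p 0 = sx v ∧ p 1 ∈ uIcc (y v) (sy v) ∧ p 2 = -k v) → T v u p := by
    rintro u v p huv ⟨h1, h2, h3⟩ ⟨h4, h5, h6⟩
    have h7 := (hB u v huv (neg_injective (h3.symm.trans h6))).2 (h2 ▸ h5) (h4 ▸ h1)
    exact Or.inr ⟨h7, h4.trans (hg v u h7).1, h2, h6⟩
  have main : ∀ u v p, u ≠ v → p ∈ (Ψ u).carrier → p ∈ (Ψ v).carrier → T u v p ∨ T v u p := by
    intro u v p huv hu hv
    have ku := hk u
    have kv := hk v
    have hu' := hh u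
    have hv' := hh v
    rcases (hmem u p).mp hu with a | a | a | a | a <;>
      rcases (hmem v p).mp hv with b | b | b | b | b
    · exact absurd (a.2.1.symm.trans b.2.1) (hT u v huv (a.2.2.symm.trans b.2.2)).1
    · exact Or.inl (top_cross v u p huv.symm b a)
    · exact Or.inl (top_vert u v p huv (Or.inl a) b.1 b.2.1)
    · linarith [a.2.2, b.2.2]
    · linarith [a.2.2, b.2.2]
    · exact Or.inr (top_cross u v p huv a b)
    · exact absurd (hx (a.1.symm.trans b.1)) huv
    · exact Or.inl (top_vert u v p huv (Or.inr a) b.1 b.2.1)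
    · linarith [a.2.2, b.2.2]
    · linarith [a.2.2, b.2.2]
    · exact Or.inr (top_vert v u p huv.symm (Or.inl b) a.1 a.2.1)
    · exact Or.inr (top_vert v u p huv.symm (Or.inr b) a.1 a.2.1)
    · exact absurd (hx (a.1.symm.trans b.1)) huv
    · exact Or.inr (bot_vert v u p huv.symm (Or.inl b) a.1 a.2.1)
    · exact Or.inr (bot_vert v u p huv.symm (Or.inr b) a.1 a.2.1)
    · linarith [a.2.2, b.2.2]
    · linarith [a.2.2, b.2.2]
    · exact Or.inl (bot_vert u v p huv (Or.inl a) b.1 b.2.1)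
    · exact absurd (hy (a.2.1.symm.trans b.2.1)) huv
    · exact Or.inr (bot_cross u v p huv a b)
    · linarith [a.2.2, b.2.2]
    · linarith [a.2.2, b.2.2]
    · exact Or.inl (bot_vert u v p huv (Or.inr a) b.1 b.2.1)
    · exact Or.inl (bot_cross v u p huv.symm b a)
    · exact absurd (a.1.symm.trans b.1) (hB u v huv (neg_injective (a.2.2.symm.trans b.2.2))).1
  have touch : ∀ u v, (f u = some v ∨ g u = some v) →
      ((Ψ u).carrier ∩ (Ψ v).carrier).Nonempty := by
    intro u v H
    have ku := hk u
    have kv := hk v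
    have hu' := hh u
    have hv' := hh v
    rcases H with H | H
    · obtain ⟨h1, h2, h3⟩ := hf u v H
      refine ⟨![tx u, ty u, h u], (hmem u _).mpr (Or.inl ⟨right_mem_uIcc, rfl, rfl⟩),
        (hmem v _).mpr (Or.inr (Or.inr (Or.inl ⟨h1, h2, ?_, h3⟩)))⟩
      change -k v ≤ h u
      linarith
    · obtain ⟨h1, h2, h3⟩ := hg u v H
      refine ⟨![sx u, sy u, -k u],
        (hmem u _).mpr (Or.inr (Or.inr (Or.inr (Or.inr ⟨rfl, right_mem_uIcc, rfl⟩)))),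
        (hmem v _).mpr (Or.inr (Or.inr (Or.inl ⟨h1, h2, ?_, ?_⟩)))⟩
      · change -k v ≤ -k u
        linarith
      · change -k u ≤ h v
        linarith
  refine ⟨Ψ, ⟨?_, ?_, ?_⟩, fun v => le_rfl⟩
  · rintro u v huv p ⟨hu, hv⟩
    rcases main u v p huv hu hv with H | H
    · exact Or.inl (hTe u v p H)
    · exact Or.inr (hTe v u p H)
  · rintro u v w huv huw hvw p ⟨hu, hv, hw⟩
    rcases main u v p huv hu hv with H | H
    · have e1 := hTx u v p H
      rcases main u w p huw hu hw with H' | H'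
      · exact hvw (hx (e1.symm.trans (hTx _ _ p H')))
      · exact huv (hx (e1.symm.trans (hTx _ _ p H'))).symm
    · have e1 := hTx v u p H
      rcases main v w p hvw hv hw with H' | H'
      · exact huw (hx (e1.symm.trans (hTx _ _ p H')))
      · exact huv (hx (e1.symm.trans (hTx _ _ p H')))
  · intro u v huv
    constructor
    · rintro ⟨p, hu, hv⟩
      rcases main u v p huv hu hv with H | H
      · exact hTa u v p H
      · exact (hTa v u p H).symm
    · intro hadj
      rcases hG u v hadj with H | H
      · exact touch u v H
      · rw [inter_comm]
        exact touch v u H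

/-- The coordinate of the target: that of the image under `f`, or an unused half-integer. -/
noncomputable def target {V : Type*} (f : V → Option V) (X : V → ℕ) (v : V) : ℝ :=
  (f v).elim ((X v : ℝ) + 1 / 2) (fun w => (X w : ℝ))

theorem target_some {V : Type*} {f : V → Option V} (X : V → ℕ) {v w : V} (h : f v = some w) :
    target f X v = X w := by
  simp [target, h]

theorem target_eq {V : Type*} {f : V → Option V} {X : V → ℕ} (hX : Function.Injective X)
    {v w : V} (h : target f X v = X w) : f v = some w := by
  unfold target at h
  cases hf : f v with
  | none =>
    exfalso
    rw [hf] at h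
    simp only [Option.elim_none] at h
    have h1 : ((2 * X v + 1 : ℕ) : ℝ) = ((2 * X w : ℕ) : ℝ) := by
      push_cast
      linarith
    have h2 : 2 * X v + 1 = 2 * X w := by exact_mod_cast h1
    omega
  | some z =>
    rw [hf] at h
    simp only [Option.elim_some] at h
    rw [hX (Nat.cast_injective h)]

theorem cast_uIcc {a b c : ℕ} (h : (a : ℝ) ∈ uIcc (b : ℝ) (c : ℝ)) :
    min b c ≤ a ∧ a ≤ max b c := by
  rw [uIcc, mem_Icc] at h
  exact_mod_cast h

/-- Every finite simple graph with maximum degree at most 4 admits a string contact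
representation in ℝ³ of complexity at most 4 (every string is a `B₄`-string). -/
theorem maxDegFour_stringContactRep {V : Type*} [Fintype V] [DecidableEq V]
    (G : SimpleGraph V) [DecidableRel G.Adj]
    (hdeg : ∀ v : V, G.degree v ≤ 4) :
    ∃ Ψ : V → AAString, IsStringContactRep G Ψ ∧ ∀ v : V, (Ψ v).bends ≤ 4 := by
  obtain ⟨f, g, X, Y, h, k, hX, hY, hfG, hgG, hG, hfh, hgk, hT, hB⟩ := exists_layout G hdeg
  have hXr : Function.Injective (fun v => (X v : ℝ)) := Nat.cast_injective.comp hX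
  have hYr : Function.Injective (fun v => (Y v : ℝ)) := Nat.cast_injective.comp hY
  have irr_f : ∀ v, f v ≠ some v := fun v hv => (hfG v v hv).ne rfl
  have irr_g : ∀ v, g v ≠ some v := fun v hv => (hgG v v hv).ne rfl
  apply geometry G f g (fun v => X v) (fun v => Y v) (fun v => (h v : ℝ) + 1)
    (fun v => (k v : ℝ) + 1) (target f X) (target f Y) (target g X) (target g Y) hXr hYr
    (fun v => by positivity) (fun v => by positivity)
    (fun v hv => irr_f v (target_eq hX hv)) (fun v hv => irr_f v (target_eq hY hv))
    (fun v hv => irr_g v (target_eq hX hv)) (fun v hv => irr_g v (target_eq hY hv))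
    hfG hgG hG
  · intro u v huv
    refine ⟨target_some X huv, target_some Y huv, ?_⟩
    have : (h u : ℝ) ≤ h v := by exact_mod_cast hfh u v huv
    linarith
  · intro u v huv
    refine ⟨target_some X huv, target_some Y huv, ?_⟩
    have : (k u : ℝ) ≤ k v := by exact_mod_cast hgk u v huv
    linarith
  · exact fun u v huv => target_eq hY huv
  · exact fun u v huv => target_eq hX huv
  · intro u v huv he
    have he' : h u = h v := by
      have : (h u : ℝ) = h v := by simpa using he
      exact_mod_cast this
    obtain ⟨u', v', hu', hv', hne, H⟩ := hT u v huv he'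
    rw [target_some Y hu', target_some Y hv', target_some X hv']
    refine ⟨fun h => hne (hYr h), fun h1 h2 => ?_⟩
    obtain ⟨a1, a2⟩ := cast_uIcc h1
    obtain ⟨a3, a4⟩ := cast_uIcc h2
    rw [hv', H a1 a2 a3 a4]
  · intro u v huv he
    have he' : k u = k v := by
      have : (k u : ℝ) = k v := by simpa using he
      exact_mod_cast this
    obtain ⟨u', v', hu', hv', hne, H⟩ := hB u v huv he'
    rw [target_some X hu', target_some X hv', target_some Y hv']
    refine ⟨fun h => hne (hXr h), fun h1 h2 => ?_⟩
    obtain ⟨a1, a2⟩ := cast_uIcc h1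
    obtain ⟨a3, a4⟩ := cast_uIcc h2
    rw [hv', H a1 a2 a3 a4]
end

section
/- Every finite triangle-free Hamiltonian simple graph with maximum degree at most 4 admits a string contact representation in ℝ³ in which every string is a B₄-string and all strings except at most one are B₃-strings. -/
open Set

/-! ### Segments and building strings -/

/-- There is a string with `k` segments, start `s`, end `e` and carrier `C`. -/
def IsStr (k : ℕ) (s e : Pt3) (C : Set Pt3) : Prop :=
  ∃ S : AAString, S.k = k ∧ S.pts 0 = s ∧ S.pts (Fin.last S.k) = e ∧ S.carrier = C

theorem mem_segment_axis (a b : Pt3) (i : Fin 3) (h : ∀ j, j ≠ i → a j = b j) (q : Pt3) :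
    q ∈ segment ℝ a b ↔ q i ∈ uIcc (a i) (b i) ∧ ∀ j, j ≠ i → q j = a j := by
  rw [← segment_eq_uIcc]
  constructor
  · rintro ⟨s, t, hs, ht, hst, rfl⟩
    refine ⟨⟨s, t, hs, ht, hst, by simp⟩, fun j hj => ?_⟩
    simp only [Pi.add_apply, Pi.smul_apply, smul_eq_mul, ← h j hj, ← add_mul, hst, one_mul]
  · rintro ⟨⟨s, t, hs, ht, hst, hq⟩, hj⟩
    refine ⟨s, t, hs, ht, hst, ?_⟩
    funext j
    by_cases hji : j = i
    · subst hji; simpa using hq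
    · simp only [Pi.add_apply, Pi.smul_apply, smul_eq_mul, ← h j hji, ← add_mul, hst, one_mul,
        hj j hji]

theorem isStr_base (p q : Pt3) (hne : p ≠ q) (hax : AxisParallel (q - p)) :
    IsStr 1 p q (segment ℝ p q) := by
  refine ⟨⟨1, ![p, q], le_refl _, ?_, ?_, ?_, ?_⟩, ?_, ?_, ?_, ?_⟩
  · intro i; fin_cases i; simpa using hne
  · intro i; fin_cases i; simpa using hax
  · intro i j h; omega
  · intro i j h; omega
  · rfl
  · rfl
  · rfl
  · ext x
    simp [AAString.carrier]

theorem isStr_cons {k : ℕ} {s e : Pt3} {C : Set Pt3} (hS : IsStr k s e C) (p : Pt3)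
    (hne : p ≠ s) (hax : AxisParallel (s - p))
    (hsec : ∀ q ∈ segment ℝ p s, q ∈ C → q = s) :
    IsStr (k + 1) p e (segment ℝ p s ∪ C) := by
  obtain ⟨S, rfl, rfl, rfl, rfl⟩ := hS
  have hmem : ∀ (j : Fin S.k) q, q ∈ segment ℝ (S.pts j.castSucc) (S.pts j.succ) →
      q ∈ S.carrier := fun j q hq => mem_iUnion.2 ⟨j, hq⟩
  have hkp := S.k_pos
  refine ⟨⟨S.k + 1, Fin.cons p S.pts, by omega, ?_, ?_, ?_, ?_⟩, ?_, ?_, ?_, ?_⟩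
  · intro i
    refine Fin.cases ?_ (fun i => ?_) i
    · simpa using hne
    · simpa [← Fin.succ_castSucc] using S.consec_ne i
  · intro i
    refine Fin.cases ?_ (fun i => ?_) i
    · simpa using hax
    · simpa [← Fin.succ_castSucc] using S.axis i
  · intro i j
    refine Fin.cases ?_ (fun i => ?_) i
    · refine Fin.cases ?_ (fun j => ?_) j
      · simp
      · intro hj
        have hj0 : j = ⟨0, hkp⟩ := by
          apply Fin.ext; simp at hj ⊢; omega
        subst hj0
        have e0 : (Fin.castSucc (⟨0, hkp⟩ : Fin S.k)) = 0 := rfl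
        simp only [← Fin.succ_castSucc, Fin.cons_succ, e0, Fin.castSucc_zero, Fin.cons_zero]
        apply Subset.antisymm
        · rintro q ⟨h1, h2⟩
          exact hsec q h1 (hmem ⟨0, hkp⟩ q h2)
        · rintro q rfl
          exact ⟨right_mem_segment _ _ _, left_mem_segment _ _ _⟩
    · refine Fin.cases ?_ (fun j => ?_) j
      · simp
      · intro hij
        simpa [← Fin.succ_castSucc] using S.simple_consec i j (by simp at hij; omega)
  · intro i j
    refine Fin.cases ?_ (fun i => ?_) i
    · refine Fin.cases ?_ (fun j => ?_) j
      · simp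
      · intro hj
        have hj0 : 0 < (j : ℕ) := by simp at hj; omega
        simp only [← Fin.succ_castSucc, Fin.cons_succ, Fin.castSucc_zero, Fin.cons_zero]
        rw [eq_empty_iff_forall_notMem]
        rintro q ⟨h1, h2⟩
        have hq := hsec q h1 (hmem j q h2)
        subst hq
        have h0 : S.pts 0 ∈ segment ℝ (S.pts (Fin.castSucc ⟨0, hkp⟩)) (S.pts (Fin.succ ⟨0, hkp⟩)) :=
          left_mem_segment _ _ _
        by_cases hj1 : (j : ℕ) = 1
        · have := S.simple_consec ⟨0, hkp⟩ j (by simp [hj1])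
          have h3 : S.pts 0 ∈ ({S.pts (Fin.succ ⟨0, hkp⟩)} : Set Pt3) := this ▸ ⟨h0, h2⟩
          exact S.consec_ne ⟨0, hkp⟩ h3
        · have := S.simple_far ⟨0, hkp⟩ j (by simp; omega)
          have h3 : S.pts 0 ∈ (∅ : Set Pt3) := this ▸ ⟨h0, h2⟩
          exact h3
    · refine Fin.cases ?_ (fun j => ?_) j
      · simp
      · intro hij
        simpa [← Fin.succ_castSucc] using S.simple_far i j (by simp at hij; omega)
  · rfl
  · rfl
  · rfl
  · ext q
    simp only [AAString.carrier, mem_iUnion, mem_union]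
    rw [Fin.exists_fin_succ]
    simp [← Fin.succ_castSucc]

theorem axisParallel_of {a b : Pt3} (i : Fin 3) (h : ∀ j, j ≠ i → a j = b j) :
    AxisParallel (b - a) := ⟨i, fun j hj => by simp [h j hj]⟩

/-- The closed axis-parallel segment as explicit set. -/
def segX (a b y z : ℝ) : Set Pt3 := {q | q 1 = y ∧ q 2 = z ∧ q 0 ∈ uIcc a b}
def segY (x a b z : ℝ) : Set Pt3 := {q | q 0 = x ∧ q 2 = z ∧ q 1 ∈ uIcc a b}
def segZ (x y a b : ℝ) : Set Pt3 := {q | q 0 = x ∧ q 1 = y ∧ q 2 ∈ uIcc a b}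

theorem agreeX (a b y z : ℝ) : ∀ j : Fin 3, j ≠ 0 → (![a, y, z] : Pt3) j = ![b, y, z] j := by
  intro j; fin_cases j <;> simp
theorem agreeY (x a b z : ℝ) : ∀ j : Fin 3, j ≠ 1 → (![x, a, z] : Pt3) j = ![x, b, z] j := by
  intro j; fin_cases j <;> simp
theorem agreeZ (x y a b : ℝ) : ∀ j : Fin 3, j ≠ 2 → (![x, y, a] : Pt3) j = ![x, y, b] j := by
  intro j; fin_cases j <;> simp

theorem segX_eq (a b y z : ℝ) : segment ℝ (![a, y, z] : Pt3) ![b, y, z] = segX a b y z := by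
  ext q
  rw [mem_segment_axis _ _ 0 (agreeX a b y z)]
  simp [segX, Fin.forall_fin_succ]; tauto
theorem segY_eq (x a b z : ℝ) : segment ℝ (![x, a, z] : Pt3) ![x, b, z] = segY x a b z := by
  ext q
  rw [mem_segment_axis _ _ 1 (agreeY x a b z)]
  simp [segY, Fin.forall_fin_succ]; tauto
theorem segZ_eq (x y a b : ℝ) : segment ℝ (![x, y, a] : Pt3) ![x, y, b] = segZ x y a b := by
  ext q
  rw [mem_segment_axis _ _ 2 (agreeZ x y a b)]
  simp [segZ, Fin.forall_fin_succ]; tauto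

theorem pt_ext {q : Pt3} {x y z : ℝ} (h0 : q 0 = x) (h1 : q 1 = y) (h2 : q 2 = z) :
    q = ![x, y, z] := by
  funext j; fin_cases j <;> simp [h0, h1, h2]

theorem base_X {a b y z : ℝ} (h : a ≠ b) :
    IsStr 1 ![a, y, z] ![b, y, z] (segX a b y z) := by
  rw [← segX_eq]
  exact isStr_base _ _ (fun e => h (by simpa using congrFun e 0)) (axisParallel_of 0 (agreeX a b y z))
theorem base_Z {x y a b : ℝ} (h : a ≠ b) :
    IsStr 1 ![x, y, a] ![x, y, b] (segZ x y a b) := by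
  rw [← segZ_eq]
  exact isStr_base _ _ (fun e => h (by simpa using congrFun e 2)) (axisParallel_of 2 (agreeZ x y a b))

theorem cons_X {k : ℕ} {b y z : ℝ} {e : Pt3} {C : Set Pt3} (hS : IsStr k ![b, y, z] e C) (a : ℝ)
    (hne : a ≠ b) (hsec : ∀ q ∈ segX a b y z, q ∈ C → q 0 = b) :
    IsStr (k + 1) ![a, y, z] e (segX a b y z ∪ C) := by
  rw [← segX_eq] at hsec ⊢
  refine isStr_cons hS _ (fun e => hne (by simpa using congrFun e 0))
    (axisParallel_of 0 (agreeX a b y z)) (fun q h1 h2 => ?_)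
  have h3 := hsec q h1 h2
  rw [segX_eq] at h1
  exact pt_ext h3 h1.1 h1.2.1
theorem cons_Y {k : ℕ} {x b z : ℝ} {e : Pt3} {C : Set Pt3} (hS : IsStr k ![x, b, z] e C) (a : ℝ)
    (hne : a ≠ b) (hsec : ∀ q ∈ segY x a b z, q ∈ C → q 1 = b) :
    IsStr (k + 1) ![x, a, z] e (segY x a b z ∪ C) := by
  rw [← segY_eq] at hsec ⊢
  refine isStr_cons hS _ (fun e => hne (by simpa using congrFun e 1))
    (axisParallel_of 1 (agreeY x a b z)) (fun q h1 h2 => ?_)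
  have h3 := hsec q h1 h2
  rw [segY_eq] at h1
  exact pt_ext h1.1 h3 h1.2.1
theorem cons_Z {k : ℕ} {x y b : ℝ} {e : Pt3} {C : Set Pt3} (hS : IsStr k ![x, y, b] e C) (a : ℝ)
    (hne : a ≠ b) (hsec : ∀ q ∈ segZ x y a b, q ∈ C → q 2 = b) :
    IsStr (k + 1) ![x, y, a] e (segZ x y a b ∪ C) := by
  rw [← segZ_eq] at hsec ⊢
  refine isStr_cons hS _ (fun e => hne (by simpa using congrFun e 2))
    (axisParallel_of 2 (agreeZ x y a b)) (fun q h1 h2 => ?_)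
  have h3 := hsec q h1 h2
  rw [segZ_eq] at h1
  exact pt_ext h1.1 h1.2.1 h3

/-! ### Orienting a graph of maximum degree two -/

def Deg2 {V : Type*} (H : SimpleGraph V) : Prop :=
  ∀ u x y z, H.Adj u x → H.Adj u y → H.Adj u z → x = y ∨ x = z ∨ y = z

def Leaf {V : Type*} (H : SimpleGraph V) (v : V) : Prop :=
  ∃ u, H.Adj v u ∧ ∀ w, H.Adj v w → w = u

/-- An orientation `D` of `H` with in- and out-degrees at most one, together with levels `b`
decreasing along the arcs, except for arcs leaving a wrapping vertex. -/
structure Good {V : Type*} (H : SimpleGraph V) (X : V → ℝ) (D : V → V → Prop) (W : V → Prop)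
    (b : V → ℝ) : Prop where
  fwd : ∀ u v w, D u v → D u w → v = w
  bwd : ∀ u v w, D u w → D v w → u = v
  asym : ∀ u v, D u v → ¬ D v u
  adj : ∀ u v, H.Adj u v ↔ D u v ∨ D v u
  inj : ∀ u v, b u = b v → u = v
  lev : ∀ u v, D u v → ¬ W u → b v < b u
  wrap : ∀ u, W u → ∃ v c, D u v ∧ D v c ∧ ¬ W v ∧ c ≠ u ∧ X c < X u ∧ X u < X v

theorem exists_other_leaf {V : Type*} [Finite V] (H : SimpleGraph V) (hd : Deg2 H) (a : V)
    (ha : Leaf H a) : ∃ v, v ≠ a ∧ Leaf H v := by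
  classical
  have := Fintype.ofFinite V
  obtain ⟨u, hu, hu'⟩ := ha
  have h1 : H.degree a = 1 := by
    rw [← SimpleGraph.card_neighborFinset_eq_degree, Finset.card_eq_one]
    refine ⟨u, ?_⟩
    ext w
    simp only [SimpleGraph.mem_neighborFinset, Finset.mem_singleton]
    exact ⟨hu' w, fun h => h ▸ hu⟩
  obtain ⟨w, hw, hodd⟩ := H.exists_ne_odd_degree_of_exists_odd_degree a (by rw [h1]; exact odd_one)
  refine ⟨w, hw, ?_⟩
  have h2 : H.degree w ≤ 2 := by
    by_contra hcon
    push Not at hcon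
    rw [← SimpleGraph.card_neighborFinset_eq_degree, Finset.two_lt_card] at hcon
    obtain ⟨x, hx, y, hy, z, hz, hxy, hxz, hyz⟩ := hcon
    simp only [SimpleGraph.mem_neighborFinset] at hx hy hz
    have := hd w x y z hx hy hz
    tauto
  have h3 : H.degree w = 1 := by
    obtain ⟨k, hk⟩ := hodd
    omega
  rw [← SimpleGraph.card_neighborFinset_eq_degree, Finset.card_eq_one] at h3
  obtain ⟨x, hx⟩ := h3
  have hm : ∀ y, H.Adj w y ↔ y = x := by
    intro y
    rw [← SimpleGraph.mem_neighborFinset, hx, Finset.mem_singleton]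
  exact ⟨x, (hm x).2 rfl, fun y hy => (hm y).1 hy⟩

theorem exists_high {V : Type*} [Finite V] (b : V → ℝ) : ∃ M, ∀ v, b v < M := by
  obtain ⟨M, hM⟩ := (Set.finite_range b).bddAbove
  exact ⟨M + 1, fun v => by linarith [hM (Set.mem_range_self v)]⟩

theorem exists_low {V : Type*} [Finite V] (b : V → ℝ) : ∃ M, ∀ v, M < b v := by
  obtain ⟨M, hM⟩ := (Set.finite_range b).bddBelow
  exact ⟨M - 1, fun v => by linarith [hM (Set.mem_range_self v)]⟩

theorem good_add_to {V : Type*} [Finite V] {H H' : SimpleGraph V} {X : V → ℝ} {D : V → V → Prop}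
    {W : V → Prop} {b : V → ℝ} (hG : Good H' X D W b) (u v : V) (huv : u ≠ v)
    (hv : ∀ w, ¬ H'.Adj v w) (hu : ∀ w, ¬ D u w)
    (hadj : ∀ x y, H.Adj x y ↔ H'.Adj x y ∨ (x = u ∧ y = v) ∨ (x = v ∧ y = u)) :
    ∃ b', Good H X (fun x y => D x y ∨ (x = u ∧ y = v)) W b' := by
  classical
  obtain ⟨M, hM⟩ := exists_low b
  have hv1 : ∀ w, ¬ D v w := fun w h => hv w ((hG.adj _ _).2 (Or.inl h))
  have hv2 : ∀ w, ¬ D w v := fun w h => hv w ((hG.adj _ _).2 (Or.inr h))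
  obtain ⟨fwd, bwd, asym, adj, inj, lev, wrap⟩ := hG
  have hWv : ∀ w, W w → w ≠ v := by
    rintro w hw rfl
    obtain ⟨x, c, h, -⟩ := wrap _ hw
    exact hv1 _ h
  refine ⟨Function.update b v M, ?_, ?_, ?_, ?_, ?_, ?_, ?_⟩
  · grind
  · grind
  · grind
  · grind
  · intro x y h
    have := hM x
    have := hM y
    simp only [Function.update_apply] at h
    split_ifs at h <;> grind
  · intro x y h hW
    have := hM x
    simp only [Function.update_apply]
    split_ifs <;> grind
  · intro x hx
    obtain ⟨y, c, h⟩ := wrap x hx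
    exact ⟨y, c, by tauto⟩

theorem good_add_from {V : Type*} [Finite V] {H H' : SimpleGraph V} {X : V → ℝ} {D : V → V → Prop}
    {W : V → Prop} {b : V → ℝ} (hG : Good H' X D W b) (u v : V) (huv : u ≠ v)
    (hv : ∀ w, ¬ H'.Adj v w) (hu : ∀ w, ¬ D w u)
    (hadj : ∀ x y, H.Adj x y ↔ H'.Adj x y ∨ (x = u ∧ y = v) ∨ (x = v ∧ y = u)) :
    ∃ b', Good H X (fun x y => D x y ∨ (x = v ∧ y = u)) W b' := by
  classical
  obtain ⟨M, hM⟩ := exists_high b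
  have hv1 : ∀ w, ¬ D v w := fun w h => hv w ((hG.adj _ _).2 (Or.inl h))
  have hv2 : ∀ w, ¬ D w v := fun w h => hv w ((hG.adj _ _).2 (Or.inr h))
  obtain ⟨fwd, bwd, asym, adj, inj, lev, wrap⟩ := hG
  refine ⟨Function.update b v M, ?_, ?_, ?_, ?_, ?_, ?_, ?_⟩
  · grind
  · grind
  · grind
  · grind
  · intro x y h
    have := hM x
    have := hM y
    simp only [Function.update_apply] at h
    split_ifs at h <;> grind
  · intro x y h hW
    have := hM x
    have := hM y
    simp only [Function.update_apply]
    split_ifs <;> grind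
  · intro x hx
    obtain ⟨y, c, h⟩ := wrap x hx
    exact ⟨y, c, by tauto⟩

theorem good_add_cycle {V : Type*} [Finite V] {H H' : SimpleGraph V} {X : V → ℝ}
    {D : V → V → Prop} {W : V → Prop} {b : V → ℝ} (hG : Good H' X D W b) (a t c : V)
    (hat : a ≠ t) (hct : c ≠ t) (hac : a ≠ c)
    (ht : ∀ w, ¬ H'.Adj t w) (ha : ∀ w, ¬ D a w) (hc : ∀ w, ¬ D w c)
    (h1 : X c < X a) (h2 : X a < X t)
    (hadj : ∀ x y, H.Adj x y ↔ H'.Adj x y ∨ (x = a ∧ y = t) ∨ (x = t ∧ y = a) ∨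
      (x = t ∧ y = c) ∨ (x = c ∧ y = t)) :
    ∃ D' W' b', Good H X D' W' b' := by
  classical
  obtain ⟨M, hM⟩ := exists_high b
  have hv1 : ∀ w, ¬ D t w := fun w h => ht w ((hG.adj _ _).2 (Or.inl h))
  have hv2 : ∀ w, ¬ D w t := fun w h => ht w ((hG.adj _ _).2 (Or.inr h))
  obtain ⟨fwd, bwd, asym, adj, inj, lev, wrap⟩ := hG
  refine ⟨fun x y => D x y ∨ (x = a ∧ y = t) ∨ (x = t ∧ y = c), fun x => W x ∨ x = a,
    Function.update b t M, ?_, ?_, ?_, ?_, ?_, ?_, ?_⟩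
  · grind
  · grind
  · grind
  · grind
  · intro x y h
    have := hM x
    have := hM y
    simp only [Function.update_apply] at h
    split_ifs at h <;> grind
  · intro x y h hW
    have := hM x
    have := hM y
    simp only [Function.update_apply]
    split_ifs <;> grind
  · rintro x (hx | rfl)
    · obtain ⟨y, d, h⟩ := wrap x hx
      refine ⟨y, d, Or.inl h.1, Or.inl h.2.1, ?_, h.2.2.2⟩
      rintro (h' | rfl)
      · exact h.2.2.1 h'
      · exact ha _ h.2.1
    · refine ⟨t, c, by simp, by simp, ?_, hac.symm, h1, h2⟩
      rintro (h' | h')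
      · obtain ⟨y, d, h, -⟩ := wrap t h'
        exact hv1 _ h
      · exact hat h'.symm

/-- Delete one edge. -/
def delE {V : Type*} (H : SimpleGraph V) (u v : V) : SimpleGraph V where
  Adj x y := H.Adj x y ∧ ¬ (x = u ∧ y = v) ∧ ¬ (x = v ∧ y = u)
  symm := ⟨fun x y h => ⟨h.1.symm, by tauto, by tauto⟩⟩
  loopless := ⟨fun x h => H.loopless.irrefl x h.1⟩

theorem delE_lt {V : Type*} (H : SimpleGraph V) (u v : V) (h : H.Adj u v) : delE H u v < H := by
  refine lt_of_le_not_ge (fun x y h => h.1) (fun hle => ?_)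
  exact (hle h).2.1 ⟨rfl, rfl⟩

theorem Deg2.mono {V : Type*} {H H' : SimpleGraph V} (h : Deg2 H) (hle : H' ≤ H) : Deg2 H' :=
  fun u x y z h1 h2 h3 => h u x y z (hle h1) (hle h2) (hle h3)

theorem orient {V : Type*} [Finite V] (X : V → ℝ) (hX : Function.Injective X)
    (H : SimpleGraph V) : Deg2 H →
    (∃ D W b, Good H X D W b) ∧
    ∀ a, Leaf H a → ∃ D W b, Good H X D W b ∧ ∃ w, D w a := by
  classical
  induction H using WellFoundedLT.induction with
  | ind H ih =>
  intro hd
  have part2 : ∀ a, Leaf H a → ∃ D W b, Good H X D W b ∧ ∃ w, D w a := by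
    intro a ha
    obtain ⟨v, hva, u, hvu, hv⟩ := exists_other_leaf H hd a ha
    have hlt := delE_lt H u v hvu.symm
    obtain ⟨i1, i2⟩ := ih _ hlt (hd.mono hlt.le)
    have huv : u ≠ v := hvu.ne'
    have hiso : ∀ w, ¬ (delE H u v).Adj v w := by
      intro w hw
      have := hv w hw.1
      exact hw.2.2 ⟨rfl, this⟩
    have hadj : ∀ x y, H.Adj x y ↔ (delE H u v).Adj x y ∨ (x = u ∧ y = v) ∨ (x = v ∧ y = u) := by
      intro x y
      constructor
      · intro h
        by_cases h1 : (x = u ∧ y = v) ∨ (x = v ∧ y = u)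
        · exact Or.inr h1
        · exact Or.inl ⟨h, by tauto, by tauto⟩
      · rintro (h | ⟨rfl, rfl⟩ | ⟨rfl, rfl⟩)
        · exact h.1
        · exact hvu.symm
        · exact hvu
    obtain ⟨u', hau', hu'⟩ := ha
    by_cases hua : u = a
    · subst hua
      obtain ⟨D, W, b, hG⟩ := i1
      have hva' := hu' v hvu.symm
      have hisou : ∀ w, ¬ D w u := by
        intro w hw
        have h1 : (delE H u v).Adj u w := (hG.adj _ _).2 (Or.inr hw)
        have h2 := hu' w h1.1
        exact h1.2.1 ⟨rfl, h2.trans hva'.symm⟩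
      obtain ⟨b', hG'⟩ := good_add_from hG u v huv hiso hisou hadj
      exact ⟨_, _, _, hG', v, Or.inr ⟨rfl, rfl⟩⟩
    · have hleaf : Leaf (delE H u v) a := by
        refine ⟨u', ⟨hau', ?_, ?_⟩, fun w hw => hu' w hw.1⟩
        · rintro ⟨h, -⟩; exact hua h.symm
        · rintro ⟨h, -⟩; exact hva h.symm
      obtain ⟨D, W, b, hG, w, hw⟩ := i2 a hleaf
      by_cases hin : ∃ x, D x u
      · obtain ⟨x, hx⟩ := hin
        have hout : ∀ y, ¬ D u y := by
          intro y hy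
          have e1 : (delE H u v).Adj u x := (hG.adj _ _).2 (Or.inr hx)
          have e2 : (delE H u v).Adj u y := (hG.adj _ _).2 (Or.inl hy)
          rcases hd u x y v e1.1 e2.1 hvu.symm with h | h | h
          · subst h; exact hG.asym _ _ hx hy
          · exact e1.2.1 ⟨rfl, h⟩
          · exact e2.2.1 ⟨rfl, h⟩
        obtain ⟨b', hG'⟩ := good_add_to hG u v huv hiso hout hadj
        exact ⟨_, _, _, hG', w, Or.inl hw⟩
      · push Not at hin
        obtain ⟨b', hG'⟩ := good_add_from hG u v huv hiso hin hadj
        exact ⟨_, _, _, hG', w, Or.inl hw⟩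
  refine ⟨?_, part2⟩
  by_cases hleaf : ∃ a, Leaf H a
  · obtain ⟨a, ha⟩ := hleaf
    obtain ⟨D, W, b, hG, -⟩ := part2 a ha
    exact ⟨D, W, b, hG⟩
  by_cases hne : ∃ x y, H.Adj x y
  swap
  · push Not at hne
    have := Fintype.ofFinite V
    refine ⟨fun _ _ => False, fun _ => False, X, ?_⟩
    exact ⟨by simp, by simp, by simp, by simp [hne], fun u v h => hX h, by simp, by simp⟩
  have hfin : {x | ∃ y, H.Adj x y}.Finite := Set.toFinite _
  obtain ⟨t, ⟨t', htt'⟩, hmax⟩ := Set.exists_max_image _ X hfin hne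
  have two : ∀ x y, H.Adj x y → ∃ z, z ≠ y ∧ H.Adj x z := by
    intro x y hxy
    by_contra hcon
    push Not at hcon
    exact hleaf ⟨x, y, hxy, fun w hw => by_contra fun h => hcon w h hw⟩
  obtain ⟨t'', hne', htt''⟩ := two t t' htt'
  -- the neighbours, sorted
  obtain ⟨a, c, hta, htc, hac⟩ : ∃ a c, H.Adj t a ∧ H.Adj t c ∧ X c < X a := by
    rcases lt_trichotomy (X t') (X t'') with h | h | h
    · exact ⟨t'', t', htt'', htt', h⟩
    · exact absurd (hX h).symm hne'
    · exact ⟨t', t'', htt', htt'', h⟩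
  have hacne : a ≠ c := by rintro rfl; exact lt_irrefl _ hac
  have hat : X a < X t :=
    lt_of_le_of_ne (hmax a ⟨t, hta.symm⟩) (fun h => hta.ne (hX h).symm)
  set H' := delE (delE H a t) t c with hH'
  have hadj : ∀ x y, H.Adj x y ↔ H'.Adj x y ∨ (x = a ∧ y = t) ∨ (x = t ∧ y = a) ∨
      (x = t ∧ y = c) ∨ (x = c ∧ y = t) := by
    intro x y
    constructor
    · intro h
      by_cases h1 : (x = a ∧ y = t) ∨ (x = t ∧ y = a) ∨ (x = t ∧ y = c) ∨ (x = c ∧ y = t)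
      · exact Or.inr h1
      · exact Or.inl ⟨⟨h, by tauto, by tauto⟩, by tauto, by tauto⟩
    · rintro (h | ⟨rfl, rfl⟩ | ⟨rfl, rfl⟩ | ⟨rfl, rfl⟩ | ⟨rfl, rfl⟩)
      · exact h.1.1
      · exact hta.symm
      · exact hta
      · exact htc
      · exact htc.symm
  have hlt : H' < H := by
    refine lt_of_le_of_lt ?_ (delE_lt H a t hta.symm)
    exact fun x y h => h.1
  have htiso : ∀ w, ¬ H'.Adj t w := by
    intro w hw
    rcases hd t w a c hw.1.1 hta htc with h | h | h
    · exact hw.1.2.2 ⟨rfl, h⟩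
    · exact hw.2.1 ⟨rfl, h⟩
    · exact hacne h
  have hleafa : Leaf H' a := by
    obtain ⟨z, hz, haz⟩ := two a t hta.symm
    refine ⟨z, ⟨⟨haz, ?_, ?_⟩, ?_, ?_⟩, fun w hw => ?_⟩
    · rintro ⟨-, h⟩; exact hz h
    · rintro ⟨h, -⟩; exact hta.ne h.symm
    · rintro ⟨h, -⟩; exact hta.ne h.symm
    · rintro ⟨h, -⟩; exact hacne h
    · rcases hd a w z t hw.1.1 haz hta.symm with h | h | h
      · exact h
      · exact absurd ⟨rfl, h⟩ hw.1.2.1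
      · exact absurd h hz
  obtain ⟨D, W, b, hG, w, hw⟩ := (ih H' hlt (hd.mono hlt.le)).2 a hleafa
  have hDadj1 : ∀ x y, D x y → H'.Adj x y := fun x y h => (hG.adj _ _).2 (Or.inl h)
  have hDadj2 : ∀ x y, D x y → H'.Adj y x := fun x y h => (hG.adj _ _).2 (Or.inr h)
  have haout : ∀ y, ¬ D a y := by
    intro y hy
    obtain ⟨z, hz, hz'⟩ := hleafa
    have e1 := hz' _ (hDadj1 _ _ hy)
    have e2 := hz' _ (hDadj2 _ _ hw)
    subst e1; subst e2
    exact hG.asym _ _ hw hy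
  have hcin : ∀ y, ¬ D y c := by
    intro y hy
    -- `c` has no outgoing arc
    have hcout : ∀ z, ¬ D c z := by
      intro z hz
      have e1 := hDadj2 _ _ hy
      have e2 := hDadj1 _ _ hz
      rcases hd c y z t e1.1.1 e2.1.1 htc.symm with h | h | h
      · subst h; exact hG.asym _ _ hy hz
      · exact e1.2.2 ⟨rfl, h⟩
      · exact e2.2.2 ⟨rfl, h⟩
    -- every vertex with an outgoing arc has an incoming one
    have hinof : ∀ x, (∃ z, D x z) → ∃ z, D z x := by
      rintro x ⟨z, hz⟩
      have hxa : x ≠ a := by rintro rfl; exact haout _ hz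
      have hxc : x ≠ c := by rintro rfl; exact hcout _ hz
      have hxt : x ≠ t := by rintro rfl; exact htiso _ (hDadj1 _ _ hz)
      obtain ⟨z', hz', hxz'⟩ := two x z (hDadj1 _ _ hz).1.1
      have : H'.Adj x z' := by
        rcases (hadj x z').1 hxz' with h | h | h | h | h
        · exact h
        · exact absurd h.1 hxa
        · exact absurd h.1 hxt
        · exact absurd h.1 hxt
        · exact absurd h.1 hxc
      rcases (hG.adj _ _).1 this with h | h
      · exact absurd (hG.fwd _ _ _ h hz) hz'
      · exact ⟨z', h⟩
    have := Fintype.ofFinite V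
    let dom : Finset V := Finset.univ.filter fun x => ∃ z, D x z
    let ran : Finset V := Finset.univ.filter fun x => ∃ z, D z x
    have hss : dom ⊂ ran := by
      rw [Finset.ssubset_iff_of_subset]
      · exact ⟨a, by simp [ran]; exact ⟨w, hw⟩, by simp [dom, haout]⟩
      · intro x hx
        simp only [dom, ran, Finset.mem_filter, Finset.mem_univ, true_and] at hx ⊢
        exact hinof x hx
    have hle : ran.card ≤ dom.card := by
      have hp : ∀ x ∈ ran, ∃ z, D z x := fun x hx => by simpa [ran] using hx
      choose! f hf using hp
      refine Finset.card_le_card_of_injOn f ?_ ?_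
      · intro x hx
        have := hf x hx
        simp only [dom, Finset.coe_filter, Finset.mem_univ, true_and, Set.mem_ofPred_eq]
        exact ⟨x, this⟩
      · intro x hx y hy hxy
        have h1 := hf x hx
        have h2 := hf y hy
        rw [hxy] at h1
        exact hG.fwd _ _ _ h1 h2
    exact absurd (Finset.card_lt_card hss) (not_lt.2 hle)
  exact good_add_cycle hG a t c hta.ne' htc.ne' hacne htiso haout hcin hac hat hadj

/-! ### The planar drawing of the Hamiltonian cycle -/

/-- The last even index that is smaller than `n`. -/
def lastE (n : ℕ) : ℕ := 2 * ((n - 1) / 2)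

/-- Starting points of the planar pieces. -/
noncomputable def pX (n i : ℕ) : ℝ :=
  if i < lastE n then (if i % 2 = 0 then 5 * (i : ℝ) - 1 else 5 * (i : ℝ) + 5)
  else if i = lastE n then 5 * (i : ℝ) + 1 else 0
noncomputable def pY (n i : ℕ) : ℝ :=
  if i < lastE n then (if i % 2 = 0 then 5 * (i : ℝ) else 5 * (i : ℝ) - 6)
  else if i = lastE n then 5 * (i : ℝ) else 5 * (lastE n : ℝ) + 1

/-- End points of the planar pieces. -/
noncomputable def eX (n i : ℕ) : ℝ :=
  if i < lastE n then (if i % 2 = 0 then 5 * (i : ℝ) + 10 else 5 * (i : ℝ) + 5) else 0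
noncomputable def eY (n i : ℕ) : ℝ :=
  if i < lastE n then (if i % 2 = 0 then 5 * (i : ℝ) else 5 * (i : ℝ) + 5)
  else if i + 1 = n then 0 else 5 * (i : ℝ)

/-- The planar pieces. -/
def pT (n i : ℕ) (x y : ℝ) : Prop :=
  (i < lastE n ∧ i % 2 = 0 ∧ y = 5 * (i : ℝ) ∧ 5 * (i : ℝ) ≤ x + 1 ∧ x ≤ 5 * (i : ℝ) + 10) ∨
  (i < lastE n ∧ i % 2 = 1 ∧ x = 5 * (i : ℝ) + 5 ∧ 5 * (i : ℝ) ≤ y + 6 ∧ y ≤ 5 * (i : ℝ) + 5) ∨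
  (i = lastE n ∧ y = 5 * (i : ℝ) ∧ 0 ≤ x ∧ x ≤ 5 * (i : ℝ) + 1) ∨
  (i = lastE n ∧ i + 1 = n ∧ x = 0 ∧ 0 ≤ y ∧ y ≤ 5 * (i : ℝ)) ∨
  (i = lastE n + 1 ∧ x = 0 ∧ 0 ≤ y ∧ y ≤ 5 * (lastE n : ℝ) + 1)

/-- Cyclic successor. -/
def Nxt (n i j : ℕ) : Prop := j = i + 1 ∨ (i + 1 = n ∧ j = 0)

theorem idx_cases {n i : ℕ} (hi : i < n) :
    (i < lastE n ∧ i % 2 = 0) ∨ (i < lastE n ∧ i % 2 = 1) ∨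
    (i = lastE n) ∨ (i = lastE n + 1 ∧ n = lastE n + 2) := by
  unfold lastE; omega

theorem pX_inj {n i j : ℕ} (hi : i < n) (hj : j < n) (h : pX n i = pX n j) : i = j := by
  have hE : lastE n % 2 = 0 := by unfold lastE; omega
  rcases idx_cases hi with h1 | h1 | h1 | h1 <;> rcases idx_cases hj with h2 | h2 | h2 | h2 <;>
  · unfold pX at h
    split_ifs at h <;> first
      | omega
      | (have h' : (5 * i + 6 : ℝ) = 5 * j + 6 := by linarith
         norm_cast at h'; omega)
      | (have h' : (5 * i : ℝ) = 5 * j + 6 := by linarith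
         norm_cast at h'; omega)
      | (have h' : (5 * i + 6 : ℝ) = 5 * j := by linarith
         norm_cast at h'; omega)
      | (have h' : (5 * i : ℝ) = 5 * j + 2 := by linarith
         norm_cast at h'; omega)
      | (have h' : (5 * i + 2 : ℝ) = 5 * j := by linarith
         norm_cast at h'; omega)
      | (have h' : (5 * i + 4 : ℝ) = 5 * j := by linarith
         norm_cast at h'; omega)
      | (have h' : (5 * i : ℝ) = 5 * j + 4 := by linarith
         norm_cast at h'; omega)
      | (have h' : (5 * i : ℝ) = 1 := by linarith
         norm_cast at h'; omega)
      | (have h' : (5 * j : ℝ) = 1 := by linarith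
         norm_cast at h'; omega)
      | (have h' : (5 * i + 5 : ℝ) = 0 := by linarith
         norm_cast at h')
      | (have h' : (5 * j + 5 : ℝ) = 0 := by linarith
         norm_cast at h')
      | (have h' : (5 * i + 1 : ℝ) = 0 := by linarith
         norm_cast at h')
      | (have h' : (5 * j + 1 : ℝ) = 0 := by linarith
         norm_cast at h')

theorem pY_inj {n i j : ℕ} (hi : i < n) (hj : j < n) (h : pY n i = pY n j) : i = j := by
  have hE : lastE n % 2 = 0 := by unfold lastE; omega
  rcases idx_cases hi with h1 | h1 | h1 | h1 <;> rcases idx_cases hj with h2 | h2 | h2 | h2 <;>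
  · unfold pY at h
    split_ifs at h <;> first
      | omega
      | (have h' : (5 * i + 6 : ℝ) = 5 * j + 6 := by linarith
         norm_cast at h'; omega)
      | (have h' : (5 * i : ℝ) = 5 * j + 6 := by linarith
         norm_cast at h'; omega)
      | (have h' : (5 * i + 6 : ℝ) = 5 * j := by linarith
         norm_cast at h'; omega)
      | (have h' : (5 * i : ℝ) = 5 * lastE n + 7 := by linarith
         norm_cast at h'; omega)
      | (have h' : (5 * j : ℝ) = 5 * lastE n + 7 := by linarith
         norm_cast at h'; omega)
      | (have h' : (5 * i : ℝ) = 5 * lastE n + 1 := by linarith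
         norm_cast at h'; omega)
      | (have h' : (5 * j : ℝ) = 5 * lastE n + 1 := by linarith
         norm_cast at h'; omega)

theorem pT_start {n i : ℕ} (hi : i < n) : pT n i (pX n i) (pY n i) := by
  have hi0 : (0 : ℝ) ≤ i := Nat.cast_nonneg i
  have hn0 : (0 : ℝ) ≤ lastE n := Nat.cast_nonneg _
  rcases idx_cases hi with h | h | h | h
  · left; simp [pX, pY, h]; linarith
  · right; left; simp [pX, pY, h]; linarith
  · right; right; left
    rw [← h] at hn0
    simp [pX, pY, ← h]; linarith
  · right; right; right; right
    have hl1 : ¬ i < lastE n := by omega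
    have hl2 : ¬ i = lastE n := by omega
    refine ⟨h.1, ?_⟩
    simp [pX, pY, hl1, hl2]; linarith

theorem pT_end {n i : ℕ} (hi : i < n) : pT n i (eX n i) (eY n i) := by
  have hi0 : (0 : ℝ) ≤ i := Nat.cast_nonneg i
  have hn0 : (0 : ℝ) ≤ lastE n := Nat.cast_nonneg _
  rcases idx_cases hi with h | h | h | h
  · left; simp [eX, eY, h]; linarith
  · right; left; simp [eX, eY, h]; linarith
  · by_cases hn : i + 1 = n
    · right; right; right; left
      simp only [eX, eY, ← h, hn]; simp [hn]
    · right; right; left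
      simp only [eX, eY, ← h, hn]; simp; linarith
  · right; right; right; right
    have hin : i + 1 = n := by omega
    have hl1 : ¬ i < lastE n := by omega
    refine ⟨h.1, ?_⟩
    simp [eX, eY, hl1, hin]; linarith

theorem pT_end_next {n i j : ℕ} (hn : 3 ≤ n) (hi : i < n) (hj : j < n) (hij : Nxt n i j) :
    pT n j (eX n i) (eY n i) := by
  have hE : lastE n % 2 = 0 := by unfold lastE; omega
  have hE2 : 2 ≤ lastE n := by unfold lastE; omega
  have hEn : lastE n + 1 = n ∨ lastE n + 2 = n := by unfold lastE; omega
  have hi0 : (0 : ℝ) ≤ i := Nat.cast_nonneg i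
  rcases idx_cases hi with h | h | h | h
  · have e : j = i + 1 := by rcases hij with h' | h' <;> omega
    have e' : (j : ℝ) = i + 1 := by rw [e]; push_cast; rfl
    right; left
    have hx : eX n i = 5 * i + 10 := by simp [eX, h]
    have hy : eY n i = 5 * i := by simp [eY, h]
    rw [hx, hy, e']
    exact ⟨by omega, by omega, by linarith, by linarith, by linarith⟩
  · have e : j = i + 1 := by rcases hij with h' | h' <;> omega
    have e' : (j : ℝ) = i + 1 := by rw [e]; push_cast; rfl
    have hx : eX n i = 5 * i + 5 := by simp [eX, h]
    have hy : eY n i = 5 * i + 5 := by simp [eY, h]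
    by_cases hl : j < lastE n
    · left
      rw [hx, hy, e']
      exact ⟨by omega, by omega, by linarith, by linarith, by linarith⟩
    · right; right; left
      rw [hx, hy, e']
      exact ⟨by omega, by linarith, by linarith, by linarith⟩
  · have hx : eX n i = 0 := by simp [eX, ← h]
    by_cases hn : i + 1 = n
    · have e : j = 0 := by rcases hij with h' | h' <;> omega
      have hy : eY n i = 0 := by simp [eY, ← h, hn]
      left
      rw [hx, hy, e]
      refine ⟨by omega, by omega, by simp, by simp, by simp⟩
    · have e : j = i + 1 := by rcases hij with h' | h' <;> omega
      have hy : eY n i = 5 * i := by simp [eY, ← h, hn]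
      right; right; right; right
      rw [hx, hy, ← h]
      exact ⟨by omega, rfl, by linarith, by linarith⟩
  · have e : j = 0 := by rcases hij with h' | h' <;> omega
    have hin : i + 1 = n := by omega
    have hl1 : ¬ i < lastE n := by omega
    have hx : eX n i = 0 := by simp [eX, hl1]
    have hy : eY n i = 0 := by simp [eY, hl1, hin]
    left
    rw [hx, hy, e]
    refine ⟨by omega, by omega, by simp, by simp, by simp⟩

theorem pT_meet {n i j : ℕ} (hn : 3 ≤ n) (hi : i < n) (hj : j < n) (hij : i ≠ j) {x y : ℝ}
    (h1 : pT n i x y) (h2 : pT n j x y) :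
    (Nxt n i j ∧ x = eX n i ∧ y = eY n i) ∨ (Nxt n j i ∧ x = eX n j ∧ y = eY n j) := by
  have hE : lastE n % 2 = 0 := by unfold lastE; omega
  have hE2 : 2 ≤ lastE n := by unfold lastE; omega
  wlog hlt : i < j generalizing i j
  · exact (this hj hi hij.symm h2 h1 (by omega)).symm
  have hEn : lastE n + 1 = n ∨ lastE n + 2 = n := by unfold lastE; omega
  rcases h1 with h1 | h1 | h1 | h1 | h1 <;> rcases h2 with h2 | h2 | h2 | h2 | h2
  all_goals try (exfalso; omega)
  · exfalso
    obtain ⟨a1, a2, rfl, a4, a5⟩ := h1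
    obtain ⟨b1, b2, b3, b4, b5⟩ := h2
    norm_cast at *; omega
  · obtain ⟨a1, a2, rfl, a4, a5⟩ := h1
    obtain ⟨b1, b2, rfl, b4, b5⟩ := h2
    norm_cast at a4 a5 b4 b5
    have e : j = i + 1 := by omega
    left
    refine ⟨Or.inl e, ?_⟩
    simp [eX, eY, a1, a2, e]; ring
  · exfalso
    obtain ⟨a1, a2, rfl, a4, a5⟩ := h1
    obtain ⟨b1, b3, b4, b5⟩ := h2
    norm_cast at b3; omega
  · obtain ⟨a1, a2, rfl, a4, a5⟩ := h1
    obtain ⟨b1, b2, rfl, b4, b5⟩ := h2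
    have e : i = 0 := by
      have a4' : (5 * i : ℝ) ≤ 1 := by linarith
      norm_cast at a4'; omega
    right
    refine ⟨Or.inr ⟨b2, e⟩, ?_⟩
    simp [eX, eY, ← b1, b2, e]
  · obtain ⟨a1, a2, rfl, a4, a5⟩ := h1
    obtain ⟨b1, rfl, b4, b5⟩ := h2
    have e : i = 0 := by
      have a4' : (5 * i : ℝ) ≤ 1 := by linarith
      norm_cast at a4'; omega
    right
    have b2 : j + 1 = n := by omega
    refine ⟨Or.inr ⟨b2, e⟩, ?_⟩
    have : ¬ j < lastE n := by omega
    simp [eX, eY, this, b2, e]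
  · obtain ⟨a1, a2, rfl, a4, a5⟩ := h1
    obtain ⟨b1, b2, rfl, b4, b5⟩ := h2
    norm_cast at a4 a5 b4 b5
    have e : j = i + 1 := by omega
    left
    refine ⟨Or.inl e, ?_⟩
    simp [eX, eY, a1, a2, e]; ring
  · exfalso
    obtain ⟨a1, a2, rfl, a4, a5⟩ := h1
    obtain ⟨b1, b2, b3, b4, b5⟩ := h2
    norm_cast at b3; omega
  · obtain ⟨a1, a2, rfl, a4, a5⟩ := h1
    obtain ⟨b1, rfl, b4, b5⟩ := h2
    norm_cast at a4 a5 b4 b5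
    have e : j = i + 1 := by omega
    left
    refine ⟨Or.inl e, ?_⟩
    simp [eX, eY, a1, a2, e]; ring
  · exfalso
    obtain ⟨a1, a2, rfl, a4, a5⟩ := h1
    obtain ⟨b1, b2, b3, b4, b5⟩ := h2
    norm_cast at b3
  · exfalso
    obtain ⟨a1, a2, rfl, a4, a5⟩ := h1
    obtain ⟨b1, b3, b4, b5⟩ := h2
    norm_cast at b3
  · obtain ⟨a1, rfl, a4, a5⟩ := h1
    obtain ⟨b1, rfl, b4, b5⟩ := h2
    left
    have hn' : i + 1 ≠ n := by omega
    refine ⟨Or.inl (by omega), ?_⟩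
    simp [eX, eY, ← a1, hn']

/-- Attaching the planar piece at height `z` on top of a string lying below height `z`. -/
theorem attach_top {n i k : ℕ} (hn : 3 ≤ n) (hi : i < n) {z : ℝ} {e : Pt3} {C : Set Pt3}
    (hS : IsStr k ![pX n i, pY n i, z] e C)
    (hC : ∀ q ∈ C, q 2 = z → q 0 = pX n i ∧ q 1 = pY n i) :
    ∃ k', k' ≤ k + 2 ∧ (i + 1 ≠ n → k' ≤ k + 1) ∧
      IsStr k' ![eX n i, eY n i, z] e ({q | q 2 = z ∧ pT n i (q 0) (q 1)} ∪ C) := by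
  have hE : lastE n % 2 = 0 := by unfold lastE; omega
  have hE2 : 2 ≤ lastE n := by unfold lastE; omega
  have hi0 : (0 : ℝ) ≤ i := Nat.cast_nonneg i
  have hn0 : (0 : ℝ) ≤ lastE n := Nat.cast_nonneg _
  rcases idx_cases hi with h | h | h | h
  · refine ⟨k + 1, by omega, by omega, ?_⟩
    have hx : eX n i = 5 * i + 10 := by simp [eX, h]
    have hy : eY n i = 5 * i := by simp [eY, h]
    have hx' : pX n i = 5 * i - 1 := by simp [pX, h]
    have hy' : pY n i = 5 * i := by simp [pY, h]
    rw [hx', hy'] at hS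
    rw [hx, hy]
    simp only [hx', hy'] at hC
    have e2 : (5 * i - 1 : ℝ) < 5 * i + 10 := by linarith
    have := cons_X hS (5 * i + 10) e2.ne' (fun q hq hqC => (hC q hqC hq.2.1).1)
    convert this using 2
    ext q
    rw [segX, uIcc_of_ge e2.le]
    constructor
    · rintro ⟨a, hp⟩
      rcases hp with hp | hp | hp | hp | hp <;> first
        | (exfalso; omega)
        | exact ⟨hp.2.2.1, a, by linarith [hp.2.2.2.1], hp.2.2.2.2⟩
    · rintro ⟨a, b, c, d⟩; exact ⟨b, Or.inl ⟨h.1, h.2, a, by linarith, d⟩⟩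
  · refine ⟨k + 1, by omega, by omega, ?_⟩
    have hx : eX n i = 5 * i + 5 := by simp [eX, h]
    have hy : eY n i = 5 * i + 5 := by simp [eY, h]
    have hx' : pX n i = 5 * i + 5 := by simp [pX, h]
    have hy' : pY n i = 5 * i - 6 := by simp [pY, h]
    rw [hx', hy'] at hS
    rw [hx, hy]
    simp only [hx', hy'] at hC
    have e2 : (5 * i - 6 : ℝ) < 5 * i + 5 := by linarith
    have := cons_Y hS (5 * i + 5) e2.ne' (fun q hq hqC => (hC q hqC hq.2.1).2)
    convert this using 2
    ext q
    rw [segY, uIcc_of_ge e2.le]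
    constructor
    · rintro ⟨a, hp⟩
      rcases hp with hp | hp | hp | hp | hp <;> first
        | (exfalso; omega)
        | exact ⟨hp.2.2.1, a, by linarith [hp.2.2.2.1], hp.2.2.2.2⟩
    · rintro ⟨a, b, c, d⟩; exact ⟨b, Or.inr (Or.inl ⟨h.1, h.2, a, by linarith, d⟩)⟩
  · have hx : eX n i = 0 := by simp [eX, ← h]
    have hx' : pX n i = 5 * i + 1 := by simp [pX, ← h]
    have hy' : pY n i = 5 * i := by simp [pY, ← h]
    rw [hx', hy'] at hS
    simp only [hx', hy'] at hC
    have hi2 : (2 : ℝ) ≤ i := by rw [h]; exact_mod_cast hE2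
    have e2 : (0 : ℝ) < 5 * i + 1 := by linarith
    have e3 : (0 : ℝ) < 5 * i := by linarith
    have s1 := cons_X hS 0 e2.ne (fun q hq hqC => (hC q hqC hq.2.1).1)
    by_cases hin : i + 1 = n
    · refine ⟨k + 2, by omega, by omega, ?_⟩
      have s2 := cons_Y s1 0 e3.ne (by
        rintro q hq (hqC | hqC)
        · exact hqC.1
        · exact (hC q hqC hq.2.1).2)
      have hy : eY n i = 0 := by simp [eY, ← h, hin]
      rw [hx, hy]
      convert s2 using 1
      rw [← Set.union_assoc]
      congr 1
      ext q
      rw [segX, segY, uIcc_of_le e2.le, uIcc_of_le e3.le]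
      constructor
      · rintro ⟨a, hp⟩
        rcases hp with hp | hp | hp | hp | hp <;> first
          | (exfalso; omega)
          | exact Or.inl ⟨hp.2.2.1, a, hp.2.2.2⟩
          | exact Or.inr ⟨hp.2.1, a, hp.2.2⟩
      · rintro (⟨a, b, c, d⟩ | ⟨a, b, c, d⟩)
        · exact ⟨b, Or.inr (Or.inr (Or.inr (Or.inl ⟨h, hin, a, c, d⟩)))⟩
        · exact ⟨b, Or.inr (Or.inr (Or.inl ⟨h, a, c, d⟩))⟩
    · refine ⟨k + 1, by omega, by omega, ?_⟩
      have hy : eY n i = 5 * i := by simp [eY, ← h, hin]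
      rw [hx, hy]
      convert s1 using 2
      ext q
      rw [segX, uIcc_of_le e2.le]
      constructor
      · rintro ⟨a, hp⟩
        rcases hp with hp | hp | hp | hp | hp <;> first
          | (exfalso; omega)
          | exact ⟨hp.2.1, a, hp.2.2⟩
      · rintro ⟨a, b, c, d⟩
        exact ⟨b, Or.inr (Or.inr (Or.inl ⟨h, a, c, d⟩))⟩
  · refine ⟨k + 1, by omega, by omega, ?_⟩
    have hl1 : ¬ i < lastE n := by omega
    have hl2 : ¬ i = lastE n := by omega
    have hin : i + 1 = n := by omega
    have hx : eX n i = 0 := by simp [eX, hl1]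
    have hy : eY n i = 0 := by simp [eY, hl1, hin]
    have hx' : pX n i = 0 := by simp [pX, hl1, hl2]
    have hy' : pY n i = 5 * lastE n + 1 := by simp [pY, hl1, hl2]
    rw [hx', hy'] at hS
    rw [hx, hy]
    simp only [hx', hy'] at hC
    have e2 : (0 : ℝ) < 5 * lastE n + 1 := by linarith
    have s1 := cons_Y hS 0 e2.ne (fun q hq hqC => (hC q hqC hq.2.1).2)
    convert s1 using 2
    ext q
    rw [segY, uIcc_of_le e2.le]
    constructor
    · rintro ⟨a, hp⟩
      rcases hp with hp | hp | hp | hp | hp <;> first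
        | (exfalso; omega)
        | exact ⟨hp.2.1, a, hp.2.2⟩
    · rintro ⟨a, b, c, d⟩
      exact ⟨b, Or.inr (Or.inr (Or.inr (Or.inr ⟨h.1, a, c, d⟩)))⟩

/-! ### The strings -/

/-- The lower part of the string of `u`. -/
def LowPart {V : Type*} (X Y : V → ℝ) (D : V → V → Prop) (W : V → Prop) (b : V → ℝ) (u : V) :
    Set Pt3 :=
  {q | (∃ v, D u v ∧ ¬ W u ∧
        (q ∈ segY (X u) (Y u) (Y v) (b u) ∨ q ∈ segX (X u) (X v) (Y v) (b u))) ∨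
    (∃ v c, W u ∧ D u v ∧ D v c ∧
        (q ∈ segY (X u) (Y u) (Y c) (b u) ∨ q ∈ segZ (X u) (Y c) (b u) (b v)))}

theorem lower_string {V : Type*} {H : SimpleGraph V} {X Y : V → ℝ} {D : V → V → Prop}
    {W : V → Prop} {b : V → ℝ} (hX : Function.Injective X) (hY : Function.Injective Y)
    (hG : Good H X D W b) {zt : ℝ} (hz : ∀ v, b v < zt) (u : V) :
    ∃ k e, k ≤ 3 ∧ IsStr k ![X u, Y u, zt] e (segZ (X u) (Y u) zt (b u) ∪ LowPart X Y D W b u) ∧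
      (∀ v, D u v → ¬ W u → e = ![X v, Y v, b u]) ∧
      (∀ v c, W u → D u v → D v c → e = ![X u, Y c, b v]) := by
  by_cases hW : W u
  · obtain ⟨v, c, h1, h2, h3, h4, h5, h6⟩ := hG.wrap u hW
    have hvu : u ≠ v := fun h => by rw [h] at h6; exact lt_irrefl _ h6
    have hYc : Y u ≠ Y c := fun h => h4 (hY h).symm
    have s0 : IsStr 1 ![X u, Y c, b u] ![X u, Y c, b v] _ :=
      base_Z (fun h => hvu (hG.inj _ _ h))
    have s1 := cons_Y s0 (Y u) hYc (fun q _ h => h.2.1)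
    have s2 := cons_Z s1 zt (hz u).ne' (by
      rintro q hq (h | h)
      · exact h.2.1
      · exact absurd (hq.2.1.symm.trans h.2.1) hYc)
    refine ⟨3, ![X u, Y c, b v], le_rfl, ?_, fun _ _ h => absurd hW h, ?_⟩
    · convert s2 using 2
      ext q
      constructor
      · rintro (⟨v', _, h, _⟩ | ⟨v', c', _, e1, e2, h⟩)
        · exact absurd hW h
        · obtain rfl := hG.fwd _ _ _ h1 e1
          obtain rfl := hG.fwd _ _ _ h2 e2
          exact h
      · intro h
        exact Or.inr ⟨v, c, hW, h1, h2, h⟩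
    · intro v' c' _ e1 e2
      obtain rfl := hG.fwd _ _ _ h1 e1
      obtain rfl := hG.fwd _ _ _ h2 e2
      rfl
  · by_cases hD : ∃ v, D u v
    · obtain ⟨v, h1⟩ := hD
      have hvu : u ≠ v := fun h => by subst h; exact hG.asym _ _ h1 h1
      have hYc : Y u ≠ Y v := fun h => hvu (hY h)
      have s0 : IsStr 1 ![X u, Y v, b u] ![X v, Y v, b u] _ :=
        base_X (fun h => hvu (hX h))
      have s1 := cons_Y s0 (Y u) hYc (fun q _ h => h.1)
      have s2 := cons_Z s1 zt (hz u).ne' (by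
        rintro q hq (h | h)
        · exact h.2.1
        · exact absurd (hq.2.1.symm.trans h.1) hYc)
      refine ⟨3, ![X v, Y v, b u], le_rfl, ?_, ?_, fun _ _ h => absurd h hW⟩
      · convert s2 using 2
        ext q
        constructor
        · rintro (⟨v', e1, _, h⟩ | ⟨v', c', h, _⟩)
          · obtain rfl := hG.fwd _ _ _ h1 e1
            exact h
          · exact absurd h hW
        · intro h
          exact Or.inl ⟨v, h1, hW, h⟩
      · intro v' e1 _
        obtain rfl := hG.fwd _ _ _ h1 e1
        rfl
    · push Not at hD
      refine ⟨1, ![X u, Y u, b u], by omega, ?_, fun v h => absurd h (hD v),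
        fun _ _ h => absurd h hW⟩
      have : LowPart X Y D W b u = ∅ := by
        ext q
        simp [LowPart, hW, hD]
      rw [this, Set.union_empty]
      exact base_Z (hz u).ne'

/-- The full point set of the string of `u`. -/
def Car {V : Type*} (n : ℕ) (idx : V → ℕ) (D : V → V → Prop) (W : V → Prop) (b : V → ℝ)
    (zt : ℝ) (u : V) : Set Pt3 :=
  {q | q 2 = zt ∧ pT n (idx u) (q 0) (q 1)} ∪
    (segZ (pX n (idx u)) (pY n (idx u)) zt (b u) ∪
      LowPart (fun u => pX n (idx u)) (fun u => pY n (idx u)) D W b u)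

/-- The contact point assigned to the ordered pair `(u, v)`. -/
def Meet {V : Type*} (n : ℕ) (idx : V → ℕ) (D : V → V → Prop) (W : V → Prop) (b : V → ℝ)
    (zt : ℝ) (u v : V) (q : Pt3) : Prop :=
  (Nxt n (idx u) (idx v) ∧ q = ![eX n (idx u), eY n (idx u), zt]) ∨
  (D u v ∧ ¬ W u ∧ q = ![pX n (idx v), pY n (idx v), b u]) ∨
  (∃ c, W u ∧ D u v ∧ D v c ∧ q = ![pX n (idx u), pY n (idx c), b v])

theorem full_string {V : Type*} {H : SimpleGraph V} {n : ℕ} (hn : 3 ≤ n) {idx : V → ℕ}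
    (hlt : ∀ u, idx u < n) (hinj : Function.Injective idx) {D : V → V → Prop}
    {W : V → Prop} {b : V → ℝ} (hG : Good H (fun u => pX n (idx u)) D W b)
    {zt : ℝ} (hz : ∀ v, b v < zt) (u : V) :
    ∃ S : AAString, S.k ≤ 5 ∧ (idx u + 1 ≠ n → S.k ≤ 4) ∧ S.carrier = Car n idx D W b zt u ∧
      ∀ v q, Meet n idx D W b zt u v q → q ∈ S.endpoints := by
  have hX : Function.Injective (fun u => pX n (idx u)) :=
    fun u v h => hinj (pX_inj (hlt u) (hlt v) h)
  have hY : Function.Injective (fun u => pY n (idx u)) :=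
    fun u v h => hinj (pY_inj (hlt u) (hlt v) h)
  obtain ⟨k, e, hk, hS, he1, he2⟩ := lower_string hX hY hG hz u
  have hC : ∀ q ∈ segZ (pX n (idx u)) (pY n (idx u)) zt (b u) ∪
      LowPart (fun u => pX n (idx u)) (fun u => pY n (idx u)) D W b u, q 2 = zt →
      q 0 = pX n (idx u) ∧ q 1 = pY n (idx u) := by
    rintro q (h | h) hq
    · exact ⟨h.1, h.2.1⟩
    · exfalso
      rcases h with ⟨v, _, _, h | h⟩ | ⟨v, c, _, _, _, h | h⟩
      · exact (hz u).ne (h.2.1.symm.trans hq)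
      · exact (hz u).ne (h.2.1.symm.trans hq)
      · exact (hz u).ne (h.2.1.symm.trans hq)
      · have h' := h.2.2
        rw [Set.mem_uIcc, hq] at h'
        have := hz u
        have := hz v
        rcases h' with h' | h' <;> linarith [h'.1, h'.2]
  obtain ⟨k', hk1, hk2, S, hSk, hS0, hSe, hSC⟩ := attach_top hn (hlt u) hS hC
  refine ⟨S, by omega, fun h => by have := hk2 h; omega, hSC, ?_⟩
  rintro v q (⟨_, rfl⟩ | ⟨h1, h2, rfl⟩ | ⟨c, h1, h2, h3, rfl⟩)
  · exact Or.inl hS0.symm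
  · exact Or.inr (hSe.trans (he1 v h1 h2)).symm
  · exact Or.inr (hSe.trans (he2 v c h1 h2 h3)).symm

theorem car_cases {V : Type*} {n : ℕ} {idx : V → ℕ}
    (hlt : ∀ u, idx u < n) {D : V → V → Prop}
    {W : V → Prop} {b : V → ℝ}
    {zt : ℝ} (hz : ∀ v, b v < zt) {u : V} {q : Pt3} (h : q ∈ Car n idx D W b zt u) :
    (q 2 = zt ∧ pT n (idx u) (q 0) (q 1)) ∨
    (q 2 < zt ∧ q 0 = pX n (idx u) ∧ (q 1 = pY n (idx u) ∨ q 2 = b u ∨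
      ∃ v c, W u ∧ D u v ∧ D v c ∧ q 1 = pY n (idx c))) ∨
    (q 2 < zt ∧ q 2 = b u ∧ ∃ v, D u v ∧ ¬ W u ∧ q 1 = pY n (idx v)) := by
  rcases h with h | h | ⟨v, h1, h2, h | h⟩ | ⟨v, c, h1, h2, h3, h | h⟩
  · exact Or.inl h
  · obtain ⟨h0, h1, h2⟩ := h
    rw [Set.uIcc_of_ge (hz u).le] at h2
    rcases h2.2.eq_or_lt with e | e
    · left
      rw [h0, h1]
      exact ⟨e, pT_start (hlt u)⟩
    · exact Or.inr (Or.inl ⟨e, h0, Or.inl h1⟩)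
  · exact Or.inr (Or.inl ⟨h.2.1.trans_lt (hz u), h.1, Or.inr (Or.inl h.2.1)⟩)
  · exact Or.inr (Or.inr ⟨h.2.1.trans_lt (hz u), h.2.1, v, h1, h2, h.1⟩)
  · exact Or.inr (Or.inl ⟨h.2.1.trans_lt (hz u), h.1, Or.inr (Or.inl h.2.1)⟩)
  · refine Or.inr (Or.inl ⟨?_, h.1, Or.inr (Or.inr ⟨v, c, h1, h2, h3, h.2.1⟩)⟩)
    have h' := h.2.2
    rw [Set.mem_uIcc] at h'
    have := hz u
    have := hz v
    rcases h' with h' | h' <;> linarith [h'.1, h'.2]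

theorem car_meet {V : Type*} {H : SimpleGraph V} {n : ℕ} (hn : 3 ≤ n) {idx : V → ℕ}
    (hlt : ∀ u, idx u < n) (hinj : Function.Injective idx) {D : V → V → Prop}
    {W : V → Prop} {b : V → ℝ} (hG : Good H (fun u => pX n (idx u)) D W b)
    {zt : ℝ} (hz : ∀ v, b v < zt) {u v : V} (huv : u ≠ v) {q : Pt3}
    (hu : q ∈ Car n idx D W b zt u) (hv : q ∈ Car n idx D W b zt v) :
    Meet n idx D W b zt u v q ∨ Meet n idx D W b zt v u q := by
  have hX : ∀ {u v : V}, pX n (idx u) = pX n (idx v) → u = v :=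
    fun {u v} h => hinj (pX_inj (hlt u) (hlt v) h)
  have hY : ∀ {u v : V}, pY n (idx u) = pY n (idx v) → u = v :=
    fun {u v} h => hinj (pY_inj (hlt u) (hlt v) h)
  have key : ∀ u v : V, u ≠ v →
      (q 2 < zt ∧ q 0 = pX n (idx u) ∧ (q 1 = pY n (idx u) ∨ q 2 = b u ∨
        ∃ v c, W u ∧ D u v ∧ D v c ∧ q 1 = pY n (idx c))) →
      (q 2 < zt ∧ q 2 = b v ∧ ∃ t, D v t ∧ ¬ W v ∧ q 1 = pY n (idx t)) →
      Meet n idx D W b zt u v q ∨ Meet n idx D W b zt v u q := by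
    rintro u v huv ⟨_, h0, h⟩ ⟨_, h2, t, h3, h4, h5⟩
    rcases h with h | h | ⟨w, c, w1, w2, w3, w4⟩
    · obtain rfl := hY (h.symm.trans h5)
      right; right; left
      exact ⟨h3, h4, pt_ext h0 h h2⟩
    · exact absurd (hG.inj _ _ (h.symm.trans h2)) huv
    · obtain rfl := hY (w4.symm.trans h5)
      obtain rfl := hG.bwd _ _ _ w3 h3
      left; right; right
      exact ⟨c, w1, w2, w3, pt_ext h0 w4 h2⟩
  rcases car_cases hlt hz hu with h1 | h1 | h1 <;> rcases car_cases hlt hz hv with h2 | h2 | h2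
  · rcases pT_meet hn (hlt u) (hlt v) (fun h => huv (hinj h)) h1.2 h2.2 with h | h
    · exact Or.inl (Or.inl ⟨h.1, pt_ext h.2.1 h.2.2 h1.1⟩)
    · exact Or.inr (Or.inl ⟨h.1, pt_ext h.2.1 h.2.2 h1.1⟩)
  · exact absurd h1.1 h2.1.ne
  · exact absurd h1.1 h2.1.ne
  · exact absurd h2.1 h1.1.ne
  · exact absurd (hX (h1.2.1.symm.trans h2.2.1)) huv
  · exact key u v huv h1 h2
  · exact absurd h2.1 h1.1.ne
  · exact (key v u huv.symm h2 h1).symm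
  · exact absurd (hG.inj _ _ (h1.2.1.symm.trans h2.2.1)) huv

theorem meet_car {V : Type*} {H : SimpleGraph V} {n : ℕ} (hn : 3 ≤ n) {idx : V → ℕ}
    (hlt : ∀ u, idx u < n) {D : V → V → Prop}
    {W : V → Prop} {b : V → ℝ} (hG : Good H (fun u => pX n (idx u)) D W b)
    {zt : ℝ} (hz : ∀ v, b v < zt) {u v : V}
    (h : Nxt n (idx u) (idx v) ∨ D u v) :
    (Car n idx D W b zt u ∩ Car n idx D W b zt v).Nonempty := by
  rcases h with h | h
  · refine ⟨![eX n (idx u), eY n (idx u), zt], Or.inl ⟨rfl, ?_⟩, Or.inl ⟨rfl, ?_⟩⟩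
    · exact pT_end (hlt u)
    · exact pT_end_next hn (hlt u) (hlt v) h
  · by_cases hW : W u
    · obtain ⟨v', c, h1, h2, h3, h4, h5, h6⟩ := hG.wrap u hW
      obtain rfl := hG.fwd _ _ _ h h1
      refine ⟨![pX n (idx u), pY n (idx c), b v], Or.inr (Or.inr (Or.inr
        ⟨v, c, hW, h, h2, Or.inr ⟨rfl, rfl, Set.right_mem_uIcc⟩⟩)),
        Or.inr (Or.inr (Or.inl ⟨c, h2, h3, Or.inr ⟨rfl, rfl, ?_⟩⟩))⟩
      exact Set.mem_uIcc.2 (Or.inr ⟨h5.le, h6.le⟩)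
    · refine ⟨![pX n (idx v), pY n (idx v), b u], Or.inr (Or.inr (Or.inl
        ⟨v, h, hW, Or.inr ⟨rfl, rfl, Set.right_mem_uIcc⟩⟩)), Or.inr (Or.inl ⟨rfl, rfl, ?_⟩)⟩
      exact Set.mem_uIcc.2 (Or.inr ⟨(hG.lev _ _ h hW).le, (hz u).le⟩)

/-! ### Indexing the Hamiltonian cycle -/

theorem ham_idx {V : Type*} [Fintype V] [DecidableEq V] {G : SimpleGraph V} {a : V}
    {p : G.Walk a a} (hp : p.IsHamiltonianCycle) :
    ∃ (n : ℕ) (idx : V → ℕ), 3 ≤ n ∧ (∀ u, idx u < n) ∧ Function.Injective idx ∧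
      (∀ i < n, ∃ u, idx u = i) ∧ ∀ u v, Nxt n (idx u) (idx v) → G.Adj u v := by
  have hcyc := hp.isCycle
  have h3 := hcyc.three_le_length
  have hsurj : ∀ u, ∃ i, i < p.length ∧ p.getVert i = u := by
    intro u
    obtain ⟨i, hi, hle⟩ := SimpleGraph.Walk.mem_support_iff_exists_getVert.1 (hp.mem_support u)
    rcases hle.eq_or_lt with e | e
    · refine ⟨0, by omega, ?_⟩
      rw [← hi, e]; simp
    · exact ⟨i, e, hi⟩
  choose idx hlt hidx using hsurj
  have hget : ∀ i < p.length, idx (p.getVert i) = i := by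
    intro i hi
    refine hcyc.getVert_injOn' ?_ ?_ (hidx _)
    · have := hlt (p.getVert i)
      simp only [Set.mem_ofPred_eq]
      omega
    · simp only [Set.mem_ofPred_eq]
      omega
  refine ⟨p.length, idx, h3, hlt, ?_, fun i hi => ⟨_, hget i hi⟩, ?_⟩
  · intro u v h
    rw [← hidx u, ← hidx v, h]
  · intro u v h
    have := p.adj_getVert_succ (hlt u)
    rw [hidx] at this
    rcases h with h | ⟨h, h'⟩
    · rwa [← h, hidx] at this
    · have e : v = a := by rw [← hidx v, h']; simp
      rw [h] at this
      simpa [e] using this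

theorem final_exists {V : Type*} [Fintype V] [DecidableEq V]
    (G : SimpleGraph V) [DecidableRel G.Adj]
    (htf : G.CliqueFree 3) (hdeg : ∀ v : V, G.degree v ≤ 4) {n : ℕ} {idx : V → ℕ} (hn : 3 ≤ n)
    (hlt : ∀ u, idx u < n) (hinj : Function.Injective idx) (hsurj : ∀ i < n, ∃ u, idx u = i)
    (hnxt : ∀ u v, Nxt n (idx u) (idx v) → G.Adj u v) :
    ∃ Ψ : V → AAString, IsStringContactRep G Ψ ∧ (∀ v : V, (Ψ v).bends ≤ 4) ∧
      ∃ v₀ : V, ∀ v : V, v ≠ v₀ → (Ψ v).bends ≤ 3 := by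
  let H : SimpleGraph V :=
    { Adj := fun u v => G.Adj u v ∧ ¬ Nxt n (idx u) (idx v) ∧ ¬ Nxt n (idx v) (idx u)
      symm := ⟨fun u v h => ⟨h.1.symm, h.2.2, h.2.1⟩⟩
      loopless := ⟨fun u h => G.loopless.irrefl u h.1⟩ }
  have hH : Deg2 H := by
    intro u x y z hx hy hz
    by_contra! hne
    obtain ⟨s, hs⟩ : ∃ s, Nxt n (idx u) (idx s) := by
      by_cases h : idx u + 1 = n
      · obtain ⟨s, hs⟩ := hsurj 0 (by omega)
        exact ⟨s, Or.inr ⟨h, hs⟩⟩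
      · obtain ⟨s, hs⟩ := hsurj (idx u + 1) (by have := hlt u; omega)
        exact ⟨s, Or.inl hs⟩
    obtain ⟨t, ht⟩ : ∃ t, Nxt n (idx t) (idx u) := by
      by_cases h : idx u = 0
      · obtain ⟨s, hs⟩ := hsurj (n - 1) (by omega)
        exact ⟨s, Or.inr ⟨by omega, h⟩⟩
      · obtain ⟨s, hs⟩ := hsurj (idx u - 1) (by have := hlt u; omega)
        exact ⟨s, Or.inl (by omega)⟩
    have hst : s ≠ t := by
      rintro rfl
      unfold Nxt at hs ht
      omega
    have hcard : ({x, y, z, s, t} : Finset V).card = 5 := by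
      have h1 : x ≠ s := by rintro rfl; exact hx.2.1 hs
      have h2 : x ≠ t := by rintro rfl; exact hx.2.2 ht
      have h3 : y ≠ s := by rintro rfl; exact hy.2.1 hs
      have h4 : y ≠ t := by rintro rfl; exact hy.2.2 ht
      have h5 : z ≠ s := by rintro rfl; exact hz.2.1 hs
      have h6 : z ≠ t := by rintro rfl; exact hz.2.2 ht
      simp [hne.1, hne.2.1, hne.2.2, h1, h2, h3, h4, h5, h6, hst]
    have hsub : ({x, y, z, s, t} : Finset V) ⊆ G.neighborFinset u := by
      intro w hw
      rw [SimpleGraph.mem_neighborFinset]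
      simp only [Finset.mem_insert, Finset.mem_singleton] at hw
      rcases hw with rfl | rfl | rfl | rfl | rfl
      · exact hx.1
      · exact hy.1
      · exact hz.1
      · exact hnxt _ _ hs
      · exact (hnxt _ _ ht).symm
    have h1 := Finset.card_le_card hsub
    have h2 := hdeg u
    rw [SimpleGraph.card_neighborFinset_eq_degree] at h1
    omega
  obtain ⟨⟨D, W, b, hG⟩, -⟩ := orient (fun u => pX n (idx u))
    (fun u v h => hinj (pX_inj (hlt u) (hlt v) h)) H hH
  obtain ⟨zt, hz⟩ := exists_high b
  choose Ψ hk5 hk4 hcar hend using full_string hn hlt hinj hG hz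
  have hmeetadj : ∀ u v q, Meet n idx D W b zt u v q → G.Adj u v := by
    rintro u v q (⟨h, _⟩ | ⟨h, _⟩ | ⟨c, _, h, _⟩)
    · exact hnxt _ _ h
    · exact ((hG.adj u v).2 (Or.inl h)).1
    · exact ((hG.adj u v).2 (Or.inl h)).1
  have hadj : ∀ u v : V, u ≠ v →
      (((Ψ u).carrier ∩ (Ψ v).carrier).Nonempty ↔ G.Adj u v) := by
    intro u v huv
    rw [hcar, hcar]
    constructor
    · rintro ⟨q, h1, h2⟩
      rcases car_meet hn hlt hinj hG hz huv h1 h2 with h | h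
      · exact hmeetadj _ _ _ h
      · exact (hmeetadj _ _ _ h).symm
    · intro h
      by_cases h1 : Nxt n (idx u) (idx v)
      · exact meet_car hn hlt hG hz (Or.inl h1)
      by_cases h2 : Nxt n (idx v) (idx u)
      · rw [Set.inter_comm]
        exact meet_car hn hlt hG hz (Or.inl h2)
      have h3 : H.Adj u v := ⟨h, h1, h2⟩
      rcases (hG.adj u v).1 h3 with h4 | h4
      · exact meet_car hn hlt hG hz (Or.inr h4)
      · rw [Set.inter_comm]
        exact meet_car hn hlt hG hz (Or.inr h4)
  refine ⟨Ψ, ⟨?_, ?_, hadj⟩, ?_, ?_⟩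
  · rintro u v huv q ⟨h1, h2⟩
    rw [hcar] at h1 h2
    rcases car_meet hn hlt hinj hG hz huv h1 h2 with h | h
    · exact Or.inl (hend _ _ _ h)
    · exact Or.inr (hend _ _ _ h)
  · rintro u v w huv huw hvw q ⟨h1, h2, h3⟩
    exact htf {u, v, w} (SimpleGraph.is3Clique_triple_iff.2
      ⟨(hadj u v huv).1 ⟨q, h1, h2⟩, (hadj u w huw).1 ⟨q, h1, h3⟩,
        (hadj v w hvw).1 ⟨q, h2, h3⟩⟩)
  · intro v
    have := hk5 v
    unfold AAString.bends
    omega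
  · obtain ⟨v₀, hv₀⟩ := hsurj (n - 1) (by omega)
    refine ⟨v₀, fun v hv => ?_⟩
    have h1 : idx v ≠ idx v₀ := fun h => hv (hinj h)
    have := hk4 v (by omega)
    unfold AAString.bends
    omega

/-- Every finite triangle-free Hamiltonian simple graph with maximum degree at most 4
admits a string contact representation in ℝ³ in which every string is a `B₄`-string
and all strings except at most one are `B₃`-strings. -/
theorem triangleFree_hamiltonian_maxDegFour_stringContactRep
    {V : Type*} [Fintype V] [DecidableEq V]
    (G : SimpleGraph V) [DecidableRel G.Adj]
    (htf : G.CliqueFree 3) (hham : G.IsHamiltonian)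
    (hdeg : ∀ v : V, G.degree v ≤ 4) :
    ∃ Ψ : V → AAString, IsStringContactRep G Ψ ∧ (∀ v : V, (Ψ v).bends ≤ 4) ∧
      ∃ v₀ : V, ∀ v : V, v ≠ v₀ → (Ψ v).bends ≤ 3 := by
  by_cases hc : Fintype.card V = 1
  · obtain ⟨v₀, hv₀⟩ := Fintype.card_eq_one_iff.1 hc
    obtain ⟨S, hk, -⟩ := base_Z (x := 0) (y := 0) (a := 0) (b := 1) (by norm_num)
    refine ⟨fun _ => S, ⟨?_, ?_, ?_⟩, ?_, v₀, ?_⟩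
    · intro u v huv
      exact absurd ((hv₀ u).trans (hv₀ v).symm) huv
    · intro u v w huv
      exact absurd ((hv₀ u).trans (hv₀ v).symm) huv
    · intro u v huv
      exact absurd ((hv₀ u).trans (hv₀ v).symm) huv
    · intro v
      simp [AAString.bends, hk]
    · intro v hv
      exact absurd (hv₀ v) hv
  · obtain ⟨a, p, hp⟩ := hham hc
    obtain ⟨n, idx, hn, hlt, hinj, hsurj, hnxt⟩ := ham_idx hp
    exact final_exists G htf hdeg hn hlt hinj hsurj hnxt
end
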